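/- arXiv:1407.4720 — 4 statements merged into one kernel-verified Lean document; each statement's English description precedes it below -/
import Mathlib

section
/- For all but finitely many pairs of integers (k,n) with 1 < k < n, d(k,n) = C(n-1,k). Formally: the set of pairs (k,n) with 1 < k < n such that d(k,n) ≠ C(n-1,k) is finite. -/
/-- `d_k(A)`: the number of `k`-element subsets of `A` that are divisors of `A`,
where `B` is a divisor of `A` if `∑ B` divides `∑ A`. -/
def dk (k : ℕ) (A : Finset ℕ) : ℕ :=
  ((A.powersetCard k).filter (fun B => B.sum id ∣ A.sum id)).card

/-- `d(k, n)`: the maximum of `d_k(A)` over all sets `A` of `n` positive integers. -/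
noncomputable def dn (k n : ℕ) : ℕ :=
  sSup {t : ℕ | ∃ A : Finset ℕ, (∀ a ∈ A, 0 < a) ∧ A.card = n ∧ dk k A = t}


open Finset

/-- number of `k`-subsets of `U` whose sum does not divide `S` -/
def badc (S k : ℕ) (U : Finset ℕ) : ℕ :=
  ((U.powersetCard k).filter (fun B => ¬ (∑ i ∈ B, i) ∣ S)).card

/-- number of `k`-subsets `T` of `U` such that `v + ∑ T` does not divide `S` -/
def badv (S k v : ℕ) (U : Finset ℕ) : ℕ :=
  ((U.powersetCard k).filter (fun B => ¬ (v + ∑ i ∈ B, i) ∣ S)).card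

lemma filter_powersetCard_insert (P : Finset ℕ → Prop) [DecidablePred P] (k v : ℕ) (U : Finset ℕ)
    (hv : v ∉ U) :
    (((insert v U).powersetCard (k+1)).filter P).card =
      ((U.powersetCard (k+1)).filter P).card +
      ((U.powersetCard k).filter (fun T => P (insert v T))).card := by
  rw [powersetCard_succ_insert hv, filter_union, card_union_of_disjoint, filter_image,
    card_image_of_injOn]
  · intro a ha b hb hab
    simp only [coe_filter, mem_powersetCard, Set.mem_ofPred_eq] at ha hb
    have h1 : v ∉ a := fun h => hv (ha.1.1 h)
    have h2 : v ∉ b := fun h => hv (hb.1.1 h)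
    have := congrArg (fun s => Finset.erase s v) hab
    simpa [erase_insert h1, erase_insert h2] using this
  · rw [disjoint_left]
    intro a ha hb
    simp only [mem_filter, mem_powersetCard, mem_image] at ha hb
    obtain ⟨⟨c, hc, rfl⟩, -⟩ := hb
    exact hv (ha.1.1 (mem_insert_self _ _))

lemma badc_insert (S k v : ℕ) (U : Finset ℕ) (hv : v ∉ U) :
    badc S (k+1) (insert v U) = badc S (k+1) U + badv S k v U := by
  unfold badc badv
  rw [filter_powersetCard_insert _ _ _ _ hv]
  congr 2
  apply filter_congr
  intro T hT
  rw [mem_powersetCard] at hT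
  rw [sum_insert (fun h => hv (hT.1 h))]

lemma double_count (P : Finset ℕ → Prop) [DecidablePred P] (r : ℕ) (U : Finset ℕ) :
    (r+1) * ((U.powersetCard (r+1)).filter P).card =
      ∑ T ∈ U.powersetCard r, ((U \ T).filter (fun z => P (insert z T))).card := by
  have h := sum_card_bipartiteAbove_eq_sum_card_bipartiteBelow
    (s := U.powersetCard r) (t := (U.powersetCard (r+1)).filter P) (fun T B => T ⊆ B)
  have h2 : ∀ B ∈ (U.powersetCard (r+1)).filter P,
      (bipartiteBelow (fun T B => T ⊆ B) (U.powersetCard r) B).card = r+1 := by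
    intro B hB
    simp only [mem_filter, mem_powersetCard] at hB
    have : bipartiteBelow (fun T B => T ⊆ B) (U.powersetCard r) B = B.powersetCard r := by
      ext T
      simp only [bipartiteBelow, mem_filter, mem_powersetCard]
      constructor
      · rintro ⟨⟨_, h⟩, hh2⟩; exact ⟨hh2, h⟩
      · rintro ⟨h, hh2⟩; exact ⟨⟨h.trans hB.1.1, hh2⟩, h⟩
    rw [this, card_powersetCard, hB.1.2]; simp
  rw [sum_congr rfl h2] at h
  rw [sum_const, smul_eq_mul, mul_comm] at h
  rw [← h]
  apply sum_congr rfl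
  intro T hT
  rw [mem_powersetCard] at hT
  symm
  apply card_bij (fun z _ => insert z T)
  · intro z hz
    simp only [mem_filter, mem_sdiff] at hz
    simp only [bipartiteAbove, mem_filter, mem_powersetCard]
    refine ⟨⟨⟨insert_subset hz.1.1 hT.1, ?_⟩, hz.2⟩, subset_insert _ _⟩
    rw [card_insert_of_notMem hz.1.2, hT.2]
  · intro a ha b hb hab
    simp only [mem_filter, mem_sdiff] at ha hb
    have : a ∈ insert b T := hab ▸ mem_insert_self a T
    rcases mem_insert.1 this with h | h
    · exact h
    · exact absurd h ha.1.2
  · intro B hB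
    simp only [bipartiteAbove, mem_filter, mem_powersetCard] at hB
    obtain ⟨⟨⟨hBU, hBc⟩, hP⟩, hTB⟩ := hB
    have : (B \ T).card = 1 := by
      rw [card_sdiff_of_subset hTB, hBc, hT.2]; omega
    obtain ⟨z, hz⟩ := card_eq_one.1 this
    have hzz : z ∈ B \ T := by rw [hz]; simp
    have hBe : insert z T = B := by
      rw [insert_eq, ← hz, sdiff_union_of_subset hTB]
    rw [mem_sdiff] at hzz
    refine ⟨z, ?_, hBe⟩
    simp only [mem_filter, mem_sdiff]
    exact ⟨⟨hBU hzz.1, hzz.2⟩, hBe ▸ hP⟩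

/-- lower bound via double counting -/
lemma dc_lower (P : Finset ℕ → Prop) [DecidablePred P] (r : ℕ) (U : Finset ℕ) (c : ℝ)
    (hr : r < U.card)
    (h : ∀ T ∈ U.powersetCard r, c ≤ (((U \ T).filter (fun z => P (insert z T))).card : ℝ)) :
    c * (U.card.choose (r+1) : ℝ) ≤ ((U.card : ℝ) - r) * (((U.powersetCard (r+1)).filter P).card : ℝ) := by
  have h1 : (((r+1) * ((U.powersetCard (r+1)).filter P).card : ℕ) : ℝ) =
      ((∑ T ∈ U.powersetCard r, ((U \ T).filter (fun z => P (insert z T))).card : ℕ) : ℝ) := by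
    rw [double_count]
  push_cast at h1
  have h2 : (U.card.choose r : ℝ) * c ≤
      ∑ T ∈ U.powersetCard r, (((U \ T).filter (fun z => P (insert z T))).card : ℝ) := by
    have := card_nsmul_le_sum (U.powersetCard r) _ c h
    rwa [card_powersetCard, nsmul_eq_mul] at this
  have h3 : (U.card.choose (r+1) : ℝ) * (r+1) = U.card.choose r * ((U.card : ℝ) - r) := by
    have := Nat.choose_succ_right_eq U.card r
    have h4 : ((U.card - r : ℕ) : ℝ) = (U.card : ℝ) - r := by
      rw [Nat.cast_sub hr.le]
    rw [← h4]; exact_mod_cast this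
  have h5 : (0:ℝ) < r + 1 := by positivity
  have h6 : (0:ℝ) < (U.card : ℝ) - r := by
    have : (r:ℝ) < U.card := by exact_mod_cast hr
    linarith
  rw [← h1] at h2
  have h7 := mul_le_mul_of_nonneg_left h2 h6.le
  have h8 := congrArg (fun y => y * c) h3
  refine le_of_mul_le_mul_left ?_ h5
  linarith

lemma dc_upper (P : Finset ℕ → Prop) [DecidablePred P] (r : ℕ) (U : Finset ℕ) (c : ℝ)
    (hr : r < U.card)
    (h : ∀ T ∈ U.powersetCard r, (((U \ T).filter (fun z => P (insert z T))).card : ℝ) ≤ c) :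
    ((U.card : ℝ) - r) * (((U.powersetCard (r+1)).filter P).card : ℝ) ≤ c * (U.card.choose (r+1) : ℝ) := by
  have h1 : (((r+1) * ((U.powersetCard (r+1)).filter P).card : ℕ) : ℝ) =
      ((∑ T ∈ U.powersetCard r, ((U \ T).filter (fun z => P (insert z T))).card : ℕ) : ℝ) := by
    rw [double_count]
  push_cast at h1
  have h2 : 
      ∑ T ∈ U.powersetCard r, (((U \ T).filter (fun z => P (insert z T))).card : ℝ) ≤ (U.card.choose r : ℝ) * c := by
    have := sum_le_card_nsmul (U.powersetCard r) _ c h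
    rwa [card_powersetCard, nsmul_eq_mul] at this
  have h3 : (U.card.choose (r+1) : ℝ) * (r+1) = U.card.choose r * ((U.card : ℝ) - r) := by
    have := Nat.choose_succ_right_eq U.card r
    have h4 : ((U.card - r : ℕ) : ℝ) = (U.card : ℝ) - r := by
      rw [Nat.cast_sub hr.le]
    rw [← h4]; exact_mod_cast this
  have h5 : (0:ℝ) < r + 1 := by positivity
  have h6 : (0:ℝ) < (U.card : ℝ) - r := by
    have : (r:ℝ) < U.card := by exact_mod_cast hr
    linarith
  rw [← h1] at h2
  have h7 := mul_le_mul_of_nonneg_left h2 h6.le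
  have h8 := congrArg (fun y => y * c) h3
  refine le_of_mul_le_mul_left ?_ h5
  linarith

/-- few completions: the quotients are distinct integers in an interval -/
lemma few_div (S b : ℕ) (hS : 0 < S) (Z : Finset ℕ) (p q : ℝ) (hp : 0 < p) (hpq : p ≤ q)
    (h : ∀ z ∈ Z, (b + z) ∣ S ∧ p ≤ (b:ℝ) + z ∧ (b:ℝ) + z ≤ q) :
    (Z.card : ℝ) ≤ S / p - S / q + 1 := by
  have hSr : (0:ℝ) < S := by exact_mod_cast hS
  have hq : 0 < q := by linarith
  have hm : ∀ z ∈ Z, S / (b+z) ∈ Finset.Icc ⌈(S:ℝ)/q⌉₊ ⌊(S:ℝ)/p⌋₊ := by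
    intro z hz
    obtain ⟨h1, h2, h3⟩ := h z hz
    have h0 : (0:ℝ) < (b:ℝ) + z := by linarith
    have h4 : ((S / (b+z) : ℕ) : ℝ) = S / ((b:ℝ)+z) := by
      rw [Nat.cast_div h1 (by push_cast; exact h0.ne')]; push_cast; rfl
    rw [Finset.mem_Icc, Nat.ceil_le, Nat.le_floor_iff (by positivity), h4]
    constructor <;> gcongr
  have hinj : Set.InjOn (fun z => S / (b+z)) (Z : Set ℕ) := by
    intro z hz w hw hzw
    have h1 := (h z hz).1
    have h2 := (h w hw).1
    simp only at hzw
    have h3 := Nat.div_mul_cancel h1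
    have h4 := Nat.div_mul_cancel h2
    rw [hzw] at h3
    have h5 : 0 < S / (b+w) := by
      rcases Nat.eq_zero_or_pos (S/(b+w)) with h | h
      · rw [h] at h4; omega
      · exact h
    have := Nat.eq_of_mul_eq_mul_left h5 (h3.trans h4.symm)
    omega
  have hc := card_le_card_of_injOn _ hm hinj
  rw [Nat.card_Icc] at hc
  have h1 : (⌊(S:ℝ)/p⌋₊ : ℝ) ≤ S/p := Nat.floor_le (by positivity)
  have h2 : (S:ℝ)/q ≤ ⌈(S:ℝ)/q⌉₊ := Nat.le_ceil _
  have h3 : (S:ℝ)/q ≤ S/p := by gcongr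
  rcases Nat.lt_or_ge ⌊(S:ℝ)/p⌋₊ ⌈(S:ℝ)/q⌉₊ with h4 | h4
  · have : Z.card = 0 := by omega
    rw [this]; push_cast; linarith
  · have : (Z.card + ⌈(S:ℝ)/q⌉₊ : ℝ) ≤ ⌊(S:ℝ)/p⌋₊ + 1 := by
      exact_mod_cast (by omega : Z.card + ⌈(S:ℝ)/q⌉₊ ≤ ⌊(S:ℝ)/p⌋₊ + 1)
    linarith

lemma sum_div_le (S b : ℕ) (hS : 0 < S) (hb : 0 < b) (Z : Finset ℕ)
    (h : ∀ z ∈ Z, (b + z) ∣ S ∧ z ≤ b) :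
    (∑ z ∈ Z, (z:ℝ)) ≤ S / 3 + b := by
  have hbr : (0:ℝ) < b := by exact_mod_cast hb
  have h1 := few_div S b hS Z b (2*b) hbr (by linarith) (fun z hz => by
    have h1 : (z:ℝ) ≤ b := by exact_mod_cast (h z hz).2
    exact ⟨(h z hz).1, by linarith [Nat.cast_nonneg (α := ℝ) z], by linarith⟩)
  have h2 := few_div S b hS (Z.filter (fun z => b < 2 * z)) (3*b/2) (2*b) (by linarith) (by linarith)
    (fun z hz => by
    rw [mem_filter] at hz
    have h1 : (z:ℝ) ≤ b := by exact_mod_cast (h z hz.1).2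
    have h2 : (b:ℝ) < 2 * z := by exact_mod_cast hz.2
    exact ⟨(h z hz.1).1, by linarith, by linarith⟩)
  have h3 : (∑ z ∈ Z, (z:ℝ)) ≤ ∑ z ∈ Z, ((b:ℝ)/2 + if b < 2*z then (b:ℝ)/2 else 0) := by
    apply sum_le_sum
    intro z hz
    have h1 : (z:ℝ) ≤ b := by exact_mod_cast (h z hz).2
    split_ifs with hh
    · linarith
    · have : (2 * z : ℝ) ≤ b := by exact_mod_cast (not_lt.1 hh)
      linarith
  rw [sum_add_distrib, ← sum_filter, sum_const, sum_const, nsmul_eq_mul, nsmul_eq_mul] at h3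
  have h4 := mul_le_mul_of_nonneg_right h1 (by linarith : (0:ℝ) ≤ b/2)
  have h5 := mul_le_mul_of_nonneg_right h2 (by linarith : (0:ℝ) ≤ b/2)
  have h6 : ((S:ℝ) / b - S/(2*b) + 1) * (b/2) + ((S:ℝ) / (3*b/2) - S/(2*b) + 1) * (b/2) = S/3 + b := by
    field_simp; ring
  linarith

lemma exists_max_insert (U : Finset ℕ) (hU : U.Nonempty) :
    ∃ v W, v ∉ W ∧ U = insert v W ∧ ∀ z ∈ W, z < v := by
  refine ⟨U.max' hU, U.erase (U.max' hU), notMem_erase _ _, (insert_erase (max'_mem _ _)).symm, ?_⟩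
  intro z hz
  exact lt_max'_of_mem_erase_max' _ _ hz

lemma badv_lower (S n r v : ℕ) (U : Finset ℕ) (hS : 0 < S) (hn : 0 < n) (hv0 : 0 < v)
    (hv : (v:ℝ) ≤ 3 * S / n) (hUv : ∀ z ∈ U, z ≤ v) (hUn : U.card ≤ n)
    (hr : 1000 * (r+2) ≤ n) (hrU : r < U.card)
    (hsum : (S:ℝ) * (1/2 - 1/50) ≤ ∑ z ∈ U, (z:ℝ)) :
    (U.card.choose (r+1) : ℝ) / 24 ≤ badv S (r+1) v U := by
  have hSr : (0:ℝ) < S := by exact_mod_cast hS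
  have hnr : (0:ℝ) < n := by exact_mod_cast hn
  have key := dc_lower (fun B => ¬ (v + ∑ i ∈ B, i) ∣ S) r U (n/24) hrU ?_
  · have h1 : ((U.card:ℝ) - r) * (badv S (r+1) v U : ℝ) ≤ n * (badv S (r+1) v U : ℝ) := by
      apply mul_le_mul_of_nonneg_right _ (Nat.cast_nonneg _)
      have : (U.card : ℝ) ≤ n := by exact_mod_cast hUn
      have := Nat.cast_nonneg (α := ℝ) r
      linarith
    have h2 : (n:ℝ) * ((U.card.choose (r+1) : ℝ) / 24) ≤ n * badv S (r+1) v U := by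
      refine le_trans (le_of_eq ?_) (key.trans h1)
      ring
    exact le_of_mul_le_mul_left h2 hnr
  · intro T hT
    rw [mem_powersetCard] at hT
    have hvT : ∀ z ∈ U, (z:ℝ) ≤ 3 * S / n := fun z hz => by
      have : (z:ℝ) ≤ v := by exact_mod_cast hUv z hz
      linarith
    have hTsum : (∑ z ∈ T, (z:ℝ)) ≤ r * (3 * S / n) := by
      have := sum_le_card_nsmul T (fun z => (z:ℝ)) (3 * S / n) (fun z hz => hvT z (hT.1 hz))
      rwa [hT.2, nsmul_eq_mul] at this
    have hrn : ((r:ℝ) + 2) * (3 * S / n) ≤ 3 * S / 1000 := by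
      have : (1000 * ((r:ℝ)+2)) ≤ n := by exact_mod_cast hr
      rw [← mul_div_assoc, div_le_div_iff₀ hnr (by norm_num)]
      nlinarith
    have hpos : (0:ℝ) < 3 * S / n := by positivity
    have hcong : (U \ T).filter (fun z => ¬ (v + ∑ i ∈ insert z T, i) ∣ S) =
        (U \ T).filter (fun z => ¬ ((v + ∑ i ∈ T, i) + z) ∣ S) := by
      apply filter_congr
      intro z hz
      rw [sum_insert (mem_sdiff.1 hz).2]
      rw [show v + (z + ∑ i ∈ T, i) = v + ∑ i ∈ T, i + z by ring]
    rw [hcong]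
    have hZ := sum_div_le S (v + ∑ i ∈ T, i) hS (by omega)
      ((U \ T).filter (fun z => ((v + ∑ i ∈ T, i) + z) ∣ S)) (fun z hz => by
        rw [mem_filter, mem_sdiff] at hz
        refine ⟨hz.2, ?_⟩
        have := hUv z hz.1.1
        omega)
    push_cast at hZ
    have hsplit := sum_filter_add_sum_filter_not (U \ T) (fun z => ((v + ∑ i ∈ T, i) + z) ∣ S)
      (fun z => (z:ℝ))
    have hsd := sum_sdiff (f := fun z : ℕ => (z:ℝ)) hT.1
    have hbad : ∑ z ∈ (U \ T).filter (fun z => ¬ ((v + ∑ i ∈ T, i) + z) ∣ S), (z:ℝ) ≤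
        (((U \ T).filter (fun z => ¬ ((v + ∑ i ∈ T, i) + z) ∣ S)).card : ℝ) * (3 * S / n) := by
      have := sum_le_card_nsmul ((U \ T).filter (fun z => ¬ ((v + ∑ i ∈ T, i) + z) ∣ S))
        (fun z => (z:ℝ)) (3 * S / n) (fun z hz => by
          rw [mem_filter, mem_sdiff] at hz
          exact hvT z hz.1.1)
      rwa [nsmul_eq_mul] at this
    have h8 : (S:ℝ) / 8 ≤
        (((U \ T).filter (fun z => ¬ ((v + ∑ i ∈ T, i) + z) ∣ S)).card : ℝ) * (3 * S / n) := by
      nlinarith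
    have h9 : (n:ℝ)/24 * (3 * S / n) = S/8 := by field_simp; norm_num
    rw [← h9] at h8
    exact le_of_mul_le_mul_right h8 hpos

lemma badc_iter (S n r u0 : ℕ) (hS : 0 < S) (hn : 0 < n) (hr : 1000 * (r+2) ≤ n) (hru : r < u0) :
    ∀ (t : ℕ) (U : Finset ℕ), (∀ z ∈ U, 0 < z ∧ (z:ℝ) ≤ 3 * S / n) → U.card ≤ n →
      u0 + t ≤ U.card → (S:ℝ) * (1/2 - 1/50) + t * (3 * S / n) ≤ ∑ z ∈ U, (z:ℝ) →
      (t:ℝ) * ((u0.choose (r+1) : ℝ) / 24) ≤ badc S (r+2) U := by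
  intro t
  induction t with
  | zero => intro U _ _ _ _; simp
  | succ t ih =>
    intro U hU hUn hUt hsum
    obtain ⟨v, W, hvW, rfl, hW⟩ := exists_max_insert U (card_pos.1 (by omega))
    rw [card_insert_of_notMem hvW] at hUn hUt
    rw [sum_insert hvW] at hsum
    have hv := hU v (mem_insert_self _ _)
    push_cast at hsum
    have hpos : (0:ℝ) ≤ 3 * S / n := by positivity
    have h1 := ih W (fun z hz => hU z (mem_insert_of_mem hz)) (by omega) (by omega) (by linarith)
    have h2 := badv_lower S n r v W hS hn hv.1 hv.2 (fun z hz => (hW z hz).le) (by omega) hr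
      (by omega) (by
        have : (0:ℝ) ≤ t * (3 * S / n) := by positivity
        linarith)
    have h3 : (u0.choose (r+1) : ℝ) ≤ W.card.choose (r+1) := by
      exact_mod_cast Nat.choose_le_choose _ (by omega)
    rw [badc_insert S (r+1) v W hvW]
    push_cast
    linarith

lemma choose_ratio (N r : ℕ) (q : ℝ) (hq1 : q ≤ 1) (hq0 : 0 ≤ q) (hr : (r:ℝ) ≤ q * N) (hrN : r ≤ N) (t : ℕ) :
    (1-q)^t * ((N+t).choose r : ℝ) ≤ N.choose r := by
  induction t with
  | zero => simp
  | succ t ih =>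
    have h1 : (((N+t).choose r : ℝ)) * (N+t+1) = ((N+t+1).choose r : ℝ) * (N+t+1-r) := by
      have := Nat.choose_mul_succ_eq (N+t) r
      have h2 : ((N+t+1-r : ℕ):ℝ) = (N:ℝ)+t+1-r := by
        rw [Nat.cast_sub (by omega)]; push_cast; ring
      rw [← h2]; exact_mod_cast this
    have h2 : ((N+t+1).choose r : ℝ) * (1-q) ≤ (N+t).choose r := by
      have hp : (0:ℝ) < (N:ℝ)+t+1 := by positivity
      refine le_of_mul_le_mul_right ?_ hp
      rw [h1, mul_assoc]
      apply mul_le_mul_of_nonneg_left _ (Nat.cast_nonneg _)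
      nlinarith [mul_nonneg hq0 (Nat.cast_nonneg (α := ℝ) t)]
    calc (1-q)^(t+1) * ((N+(t+1)).choose r : ℝ) = (1-q)^t * (((N+t+1).choose r : ℝ) * (1-q)) := by
          rw [pow_succ, ← add_assoc]; ring
      _ ≤ (1-q)^t * ((N+t).choose r : ℝ) := by
          apply mul_le_mul_of_nonneg_left h2 (pow_nonneg (by linarith) _)
      _ ≤ _ := ih

lemma badv_lower2 (S n r v : ℕ) (U : Finset ℕ) (hS : 0 < S) (hn : 0 < n) (hv0 : 0 < v)
    (hv : 3 * S / n ≤ (v:ℝ)) (hvS : v ≤ S) (hUn : n ≤ U.card + 2)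
    (hr : 1000 * (r+2) ≤ n) (hrU : r < U.card) :
    (U.card.choose (r+1) : ℝ) * (3/5) ≤ badv S (r+1) v U := by
  have hSr : (0:ℝ) < S := by exact_mod_cast hS
  have hnr : (0:ℝ) < n := by exact_mod_cast hn
  have hvr : (0:ℝ) < v := by exact_mod_cast hv0
  have key := dc_upper (fun B => (v + ∑ i ∈ B, i) ∣ S) r U (n/3) hrU ?_
  · have hc := card_filter_add_card_filter_not (s := U.powersetCard (r+1))
      (fun B => (v + ∑ i ∈ B, i) ∣ S)
    rw [card_powersetCard] at hc
    have hc' : (((U.powersetCard (r+1)).filter (fun B => (v + ∑ i ∈ B, i) ∣ S)).card : ℝ) +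
      badv S (r+1) v U = U.card.choose (r+1) := by exact_mod_cast hc
    have h1 : (n:ℝ) * (99/100) ≤ (U.card:ℝ) - r := by
      have h2 : (n:ℝ) ≤ U.card + 2 := by exact_mod_cast hUn
      have h3 : (1000 * ((r:ℝ)+2)) ≤ n := by exact_mod_cast hr
      linarith
    have h2 := mul_le_mul_of_nonneg_right h1
      (Nat.cast_nonneg (α := ℝ) ((U.powersetCard (r+1)).filter (fun B => (v + ∑ i ∈ B, i) ∣ S)).card)
    have h3 : (n:ℝ) * (99/100 * (((U.powersetCard (r+1)).filter (fun B => (v + ∑ i ∈ B, i) ∣ S)).card : ℝ))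
      ≤ n * (U.card.choose (r+1) / 3 : ℝ) := by
      refine le_trans (le_of_eq ?_) ((h2.trans key).trans (le_of_eq ?_)) <;> ring
    have h4 := le_of_mul_le_mul_left h3 hnr
    have h5 := Nat.cast_nonneg (α := ℝ) (U.card.choose (r+1))
    linarith
  · intro T hT
    have := few_div S (v + ∑ i ∈ T, i) hS
      ((U \ T).filter (fun z => (v + ∑ i ∈ insert z T, i) ∣ S)) v S hvr (by exact_mod_cast hvS) ?_
    · have h1 : (S:ℝ)/S = 1 := by field_simp
      have h2 : (S:ℝ)/v ≤ n/3 := by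
        rw [div_le_iff₀ hnr] at hv
        rw [div_le_div_iff₀ hvr (by norm_num)]; linarith
      linarith
    · intro z hz
      rw [mem_filter, mem_sdiff] at hz
      obtain ⟨⟨h1, h2⟩, h3⟩ := hz
      rw [sum_insert h2, show v + (z + ∑ i ∈ T, i) = v + ∑ i ∈ T, i + z by ring] at h3
      refine ⟨h3, ?_, ?_⟩
      · exact_mod_cast (by omega : v ≤ v + ∑ i ∈ T, i + z)
      · exact_mod_cast Nat.le_of_dvd hS h3

lemma badv_full (S r v : ℕ) (U : Finset ℕ) (hpos : ∀ z ∈ U, 0 < z) (hS : S = v + ∑ i ∈ U, i)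
    (hv : S ≤ 2 * v) (hr : 0 < r) (hrU : r < U.card) :
    badv S r v U = U.card.choose r := by
  unfold badv
  rw [filter_true_of_mem, card_powersetCard]
  intro T hT hd
  rw [mem_powersetCard] at hT
  have h1 : 0 < ∑ i ∈ T, i := sum_pos (fun i hi => hpos i (hT.1 hi)) (card_pos.1 (by omega))
  have h2 : 0 < ∑ i ∈ U \ T, i := by
    apply sum_pos (fun i hi => hpos i (mem_sdiff.1 hi).1)
    rw [← card_pos, card_sdiff_of_subset hT.1]; omega
  have h3 := sum_sdiff (f := fun z : ℕ => z) hT.1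
  obtain ⟨c, hc⟩ := hd
  have : c < 2 := by
    by_contra h
    have : 2 ≤ c := by omega
    have := Nat.mul_le_mul_left (v + ∑ i ∈ T, i) this
    omega
  interval_cases c <;> omega

/-- Regime 1 -/
lemma regime1 (A : Finset ℕ) (n r : ℕ) (hA : ∀ a ∈ A, 0 < a) (hn : A.card = n) (hN : 1000000 ≤ n)
    (hr : 1000 * (r+2) ≤ n) :
    (n-1).choose (r+1) ≤ badc (∑ i ∈ A, i) (r+2) A := by
  obtain ⟨x, A', hx, rfl, hxA⟩ := exists_max_insert A (card_pos.1 (by omega))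
  have hcA : A'.card + 1 = n := by rw [← hn, card_insert_of_notMem hx]
  obtain ⟨y, W, hy, rfl, hyW⟩ := exists_max_insert A' (card_pos.1 (by omega))
  have hcW : W.card + 2 = n := by rw [← hcA, card_insert_of_notMem hy]
  set S := ∑ i ∈ insert x (insert y W), i with hSdef
  have hx0 : 0 < x := hA x (by simp)
  have hy0 : 0 < y := hA y (by simp)
  have hSx : S = x + ∑ i ∈ insert y W, i := by rw [hSdef, sum_insert hx]
  have hSy : S = x + (y + ∑ i ∈ W, i) := by rw [hSx, sum_insert hy]
  have hS0 : 0 < S := by omega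
  have hn0 : 0 < n := by omega
  have hSr : (0:ℝ) < S := by exact_mod_cast hS0
  have hnr : (1000000:ℝ) ≤ n := by exact_mod_cast hN
  rw [badc_insert S (r+1) x _ hx]
  have hn1 : (insert y W).card = n - 1 := by omega
  by_cases h1 : S ≤ 2 * x
  · rw [badv_full S (r+1) x _ (fun z hz => hA z (mem_insert_of_mem hz)) hSx h1 (by omega) (by omega), hn1]
    omega
  by_cases h2 : 3 * S / n ≤ (y:ℝ)
  · have hxy : y < x := hxA y (by simp)
    have h2' : 3 * S / n ≤ (x:ℝ) := by
      have : (y:ℝ) < x := by exact_mod_cast hxy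
      linarith
    have e1 := badv_lower2 S n r x (insert y W) hS0 hn0 hx0 h2' (by omega) (by omega) hr (by omega)
    have e2 := badv_lower2 S n r y W hS0 hn0 hy0 h2 (by omega) (by omega) hr (by omega)
    rw [badc_insert S (r+1) y _ hy]
    have e3 := choose_ratio W.card (r+1) (1/10) (by norm_num) (by norm_num) (by
      have : 1000 * (((r+1 : ℕ):ℝ)) ≤ 2 * W.card := by exact_mod_cast (by omega)
      linarith) (by omega) 1
    rw [show W.card + 1 = n - 1 by omega] at e3
    rw [hn1] at e1
    rw [← Nat.cast_le (α := ℝ)]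
    push_cast
    have := Nat.cast_nonneg (α := ℝ) (badc S (r+1+1) W)
    have := Nat.cast_nonneg (α := ℝ) ((n-1).choose (r+1))
    linarith
  · push Not at h1 h2
    have e1 := badc_iter S n r (n-33) hS0 hn0 hr (by omega) 32 (insert y W) (by
      intro z hz
      refine ⟨hA z (mem_insert_of_mem hz), ?_⟩
      have : z ≤ y := by
        rcases mem_insert.1 hz with rfl | h
        · exact le_rfl
        · exact (hyW z h).le
      have : (z:ℝ) ≤ y := by exact_mod_cast this
      linarith) (by omega) (by omega) (by
      have h3 : (S:ℝ) = x + ∑ z ∈ insert y W, (z:ℝ) := by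
        have := congrArg (Nat.cast (R := ℝ)) hSx
        push_cast at this
        exact this
      have h4 : (2:ℝ) * x < S := by exact_mod_cast h1
      have h5 : 3 * (S:ℝ) / n ≤ 3 * S / 1000000 := by gcongr
      push_cast
      linarith)
    have e3 := choose_ratio (n-33) (r+1) (1/500) (by norm_num) (by norm_num) (by
      have : 500 * (((r+1 : ℕ):ℝ)) ≤ (n-33 : ℕ) := by exact_mod_cast (by omega)
      linarith) (by omega) 32
    rw [show n-33+32 = n - 1 by omega] at e3
    have e4 : (3/4:ℝ) ≤ (1-1/500)^32 := by norm_num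
    have e5 := mul_le_mul_of_nonneg_right e4 (Nat.cast_nonneg (α := ℝ) ((n-1).choose (r+1)))
    rw [← Nat.cast_le (α := ℝ)]
    push_cast at e1 ⊢
    have := Nat.cast_nonneg (α := ℝ) (badv S (r+1) x (insert y W))
    linarith

lemma sum_mem_swap (r : ℕ) (U : Finset ℕ) (g : Finset ℕ → ℕ → ℝ) :
    ∑ B ∈ U.powersetCard (r+1), ∑ i ∈ B, g B i =
      ∑ i ∈ U, ∑ T ∈ (U.erase i).powersetCard r, g (insert i T) i := by
  rw [sum_comm' (t' := U) (s' := fun i => (U.powersetCard (r+1)).filter (fun B => i ∈ B))]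
  · apply sum_congr rfl
    intro i hi
    apply sum_nbij' (fun B => B.erase i) (fun T => insert i T)
    · intro B hB
      simp only [mem_filter, mem_powersetCard] at hB ⊢
      refine ⟨erase_subset_erase _ hB.1.1, ?_⟩
      rw [card_erase_of_mem hB.2, hB.1.2]; rfl
    · intro T hT
      simp only [mem_filter, mem_powersetCard] at hT ⊢
      have hiT : i ∉ T := fun h => by simpa using hT.1 h
      refine ⟨⟨insert_subset hi (hT.1.trans (erase_subset _ _)), ?_⟩, mem_insert_self _ _⟩
      rw [card_insert_of_notMem hiT, hT.2]
    · intro B hB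
      simp only [mem_filter] at hB
      exact insert_erase hB.2
    · intro T hT
      simp only [mem_powersetCard] at hT
      exact erase_insert (fun h => by simpa using hT.1 h)
    · intro B hB
      simp only [mem_filter] at hB
      rw [insert_erase hB.2]
  · intro B i
    simp only [mem_filter, mem_powersetCard]
    constructor
    · rintro ⟨h1, h2⟩; exact ⟨⟨h1, h2⟩, h1.1 h2⟩
    · rintro ⟨⟨h1, h2⟩, h3⟩; exact ⟨h1, h2⟩

lemma first_moment (r : ℕ) (U : Finset ℕ) (f : ℕ → ℝ) :
    ∑ B ∈ U.powersetCard (r+1), ∑ i ∈ B, f i = ((U.card - 1).choose r : ℝ) * ∑ i ∈ U, f i := by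
  rw [sum_mem_swap r U (fun _ i => f i), mul_sum]
  apply sum_congr rfl
  intro i hi
  rw [sum_const, card_powersetCard, card_erase_of_mem hi, nsmul_eq_mul]

lemma second_moment (r : ℕ) (U : Finset ℕ) (f : ℕ → ℝ) :
    ∑ B ∈ U.powersetCard (r+2), (∑ i ∈ B, f i)^2 =
      ((U.card - 1).choose (r+1) : ℝ) * (∑ i ∈ U, f i ^2) +
      ((U.card - 2).choose r : ℝ) * ((∑ i ∈ U, f i)^2 - ∑ i ∈ U, f i ^2) := by
  have h1 : ∑ B ∈ U.powersetCard (r+2), (∑ i ∈ B, f i)^2 =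
      ∑ B ∈ U.powersetCard (r+1+1), ∑ i ∈ B, f i * (∑ j ∈ B, f j) := by
    apply sum_congr rfl
    intro B _
    rw [sq, sum_mul]
  rw [h1, sum_mem_swap (r+1) U (fun B i => f i * ∑ j ∈ B, f j)]
  have h2 : ∀ i ∈ U, ∑ T ∈ (U.erase i).powersetCard (r+1), f i * ∑ j ∈ insert i T, f j =
      ((U.card - 1).choose (r+1) : ℝ) * f i ^2 +
      ((U.card - 2).choose r : ℝ) * (f i * (∑ i ∈ U, f i) - f i ^ 2) := by
    intro i hi
    have h3 : ∑ T ∈ (U.erase i).powersetCard (r+1), f i * ∑ j ∈ insert i T, f j =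
        ∑ T ∈ (U.erase i).powersetCard (r+1), (f i ^2 + f i * ∑ j ∈ T, f j) := by
      apply sum_congr rfl
      intro T hT
      rw [mem_powersetCard] at hT
      rw [sum_insert (fun h => by simpa using hT.1 h)]
      ring
    rw [h3, sum_add_distrib, sum_const, card_powersetCard, card_erase_of_mem hi, nsmul_eq_mul,
      ← mul_sum, first_moment, card_erase_of_mem hi, ← add_sum_erase U f hi,
      show U.card - 1 - 1 = U.card - 2 by omega]
    ring
  rw [sum_congr rfl h2, sum_add_distrib, ← mul_sum, ← mul_sum, sum_sub_distrib, ← sum_mul]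
  ring

/-- divisors with large sum are rare -/
lemma large_div_few (S n r : ℕ) (A : Finset ℕ) (hS : 0 < S) (hn : A.card = n) (hn0 : 0 < n)
    (hr : 2 * (r+1) ≤ n) (M : ℝ) (hM : 1 ≤ M) :
    (((A.powersetCard (r+1)).filter (fun B : Finset ℕ => (∑ i ∈ B, i) ∣ S ∧ (S:ℝ) / M ≤ ∑ i ∈ B, (i:ℝ))).card : ℝ)
      ≤ 2 * M / n * (n.choose (r+1)) := by
  have hSr : (0:ℝ) < S := by exact_mod_cast hS
  have hnr : (0:ℝ) < n := by exact_mod_cast hn0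
  have hM0 : 0 < M := by linarith
  have key := dc_upper (fun B : Finset ℕ => (∑ i ∈ B, i) ∣ S ∧ (S:ℝ) / M ≤ ∑ i ∈ B, (i:ℝ)) r A M (by omega) ?_
  · rw [hn] at key
    have h1 : (n:ℝ) / 2 ≤ (n:ℝ) - r := by
      have : (2 * ((r:ℝ)+1)) ≤ n := by exact_mod_cast hr
      linarith
    have h2 := (mul_le_mul_of_nonneg_right h1 (Nat.cast_nonneg (α := ℝ) _)).trans key
    have h3 : (0:ℝ) < n / 2 := by linarith
    refine le_of_mul_le_mul_left (h2.trans (le_of_eq ?_)) h3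
    field_simp
  · intro T hT
    have hp : (0:ℝ) < S / M := by positivity
    have := few_div S (∑ i ∈ T, i) hS
      ((A \ T).filter (fun z => (∑ i ∈ insert z T, i) ∣ S ∧ (S:ℝ) / M ≤ ∑ i ∈ insert z T, (i:ℝ)))
      (S/M) S hp (div_le_self hSr.le hM) ?_
    · have h1 : (S:ℝ)/S = 1 := by field_simp
      have h2 : (S:ℝ)/(S/M) = M := by field_simp
      linarith
    · intro z hz
      rw [mem_filter, mem_sdiff] at hz
      obtain ⟨⟨h1, h2⟩, h3, h4⟩ := hz
      rw [sum_insert h2, add_comm] at h3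
      rw [sum_insert h2, add_comm] at h4
      refine ⟨h3, ?_, ?_⟩
      · push_cast; exact h4
      · exact_mod_cast Nat.le_of_dvd hS h3

lemma badc_ge (S n r : ℕ) (A : Finset ℕ) (hS : 0 < S) (hn : A.card = n) (hn0 : 0 < n)
    (hr : 2 * (r+1) ≤ n) (M : ℝ) (hM : 1 ≤ M) :
    (((A.powersetCard (r+1)).filter (fun B : Finset ℕ => (S:ℝ) / M ≤ ∑ i ∈ B, (i:ℝ))).card : ℝ)
      - 2 * M / n * (n.choose (r+1)) ≤ badc S (r+1) A := by
  have h1 := large_div_few S n r A hS hn hn0 hr M hM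
  have h2 : ((A.powersetCard (r+1)).filter (fun B : Finset ℕ => (S:ℝ) / M ≤ ∑ i ∈ B, (i:ℝ))).card ≤
      badc S (r+1) A +
      ((A.powersetCard (r+1)).filter (fun B : Finset ℕ => (∑ i ∈ B, i) ∣ S ∧ (S:ℝ) / M ≤ ∑ i ∈ B, (i:ℝ))).card := by
    unfold badc
    refine le_trans (card_le_card ?_) (card_union_le _ _)
    intro B hB
    simp only [mem_union, mem_filter] at hB ⊢
    by_cases h : (∑ i ∈ B, i) ∣ S
    · right; exact ⟨hB.1, h, hB.2⟩
    · left; exact ⟨hB.1, h⟩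
  have h3 : (((A.powersetCard (r+1)).filter (fun B : Finset ℕ => (S:ℝ) / M ≤ ∑ i ∈ B, (i:ℝ))).card : ℝ) ≤
      badc S (r+1) A +
      ((A.powersetCard (r+1)).filter (fun B : Finset ℕ => (∑ i ∈ B, i) ∣ S ∧ (S:ℝ) / M ≤ ∑ i ∈ B, (i:ℝ))).card := by
    exact_mod_cast h2
  linarith

set_option maxHeartbeats 2000000 in
/-- Regime 2 -/
lemma regime2 (A : Finset ℕ) (n r : ℕ) (hA : ∀ a ∈ A, 0 < a) (hn : A.card = n)
    (hN : 1000000000 ≤ n) (hr1 : n ≤ 1000 * (r+2)) (hr2 : 2 * (r+2) ≤ n) :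
    (n-1).choose (r+1) ≤ badc (∑ i ∈ A, i) (r+2) A := by
  obtain ⟨x, A', hx, hAe, hxA⟩ := exists_max_insert A (card_pos.1 (by omega))
  have hcA : A'.card + 1 = n := by rw [← hn, hAe, card_insert_of_notMem hx]
  set S := ∑ i ∈ A, i with hSdef
  have hx0 : 0 < x := hA x (by rw [hAe]; simp)
  have hSx : S = x + ∑ i ∈ A', i := by rw [hSdef, hAe, sum_insert hx]
  have hS0 : 0 < S := by omega
  have hn0 : 0 < n := by omega
  have hSr : (0:ℝ) < S := by exact_mod_cast hS0
  have hnr : (1000000000:ℝ) ≤ n := by exact_mod_cast hN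
  have hn1 : A'.card = n - 1 := by omega
  have hSx' : (S:ℝ) = x + ∑ z ∈ A', (z:ℝ) := by
    have := congrArg (Nat.cast (R := ℝ)) hSx
    push_cast at this
    exact this
  have hSS : (S:ℝ) = ∑ z ∈ A, (z:ℝ) := by rw [hSdef]; push_cast; rfl
  by_cases h1 : S ≤ 2 * x
  · rw [hAe, badc_insert S (r+1) x _ hx, badv_full S (r+1) x _
      (fun z hz => hA z (by rw [hAe]; exact mem_insert_of_mem hz)) hSx h1 (by omega) (by omega), hn1]
    omega
  have hbase := badc_ge S n (r+1) A hS0 hn hn0 (by omega) 16000 (by norm_num)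
  have hsmall : 2 * (16000:ℝ) / n ≤ 1/20000 := by
    rw [div_le_div_iff₀ (by linarith) (by norm_num)]; linarith
  have hsmall' := mul_le_mul_of_nonneg_right hsmall (Nat.cast_nonneg (α := ℝ) (n.choose (r+1+1)))
  have hk1 : (1:ℝ)/1000 * n ≤ (r:ℝ) + 2 := by
    have : (n:ℝ) ≤ 1000 * ((r:ℝ)+2) := by exact_mod_cast hr1
    linarith
  have hk2 : 2 * ((r:ℝ) + 2) ≤ n := by exact_mod_cast hr2
  have hC1 : (n:ℝ) * ((n-1).choose (r+1) : ℝ) = n.choose (r+2) * ((r:ℝ) + 2) := by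
    have := Nat.add_one_mul_choose_eq (n-1) (r+1)
    rw [show n - 1 + 1 = n by omega] at this
    exact_mod_cast this
  have hC2 : ((n-1 : ℕ):ℝ) * ((n-2).choose r : ℝ) = (n-1).choose (r+1) * ((r:ℝ) + 1) := by
    have := Nat.add_one_mul_choose_eq (n-2) r
    rw [show n - 2 + 1 = n-1 by omega] at this
    exact_mod_cast this
  have hC3 : (n.choose (r+2) : ℝ) = (n-1).choose (r+1) + (n-1).choose (r+2) := by
    have := Nat.choose_succ_succ (n-1) (r+1)
    rw [show (n - 1).succ = n by omega] at this
    exact_mod_cast this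
  have hn1r : ((n-1 : ℕ):ℝ) = n - 1 := by rw [Nat.cast_sub (by omega)]; simp
  have hCpos : (0:ℝ) < n.choose (r+2) := by
    exact_mod_cast Nat.choose_pos (by omega)
  rw [← Nat.cast_le (α := ℝ)]
  have hhalf : ((n-1).choose (r+1) : ℝ) ≤ n.choose (r+2) / 2 := by
    refine le_of_mul_le_mul_left ?_ (by linarith : (0:ℝ) < n)
    rw [hC1]; nlinarith
  push Not at h1
  have h1r : 2 * (x:ℝ) < S := by exact_mod_cast h1
  by_cases h2 : (S:ℝ)/16000 ≤ x
  · have e1 : ((A.powersetCard (r+2)).filter (fun B : Finset ℕ => (S:ℝ) / 16000 ≤ ∑ i ∈ B, (i:ℝ))).card =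
        ((A'.powersetCard (r+2)).filter (fun B : Finset ℕ => (S:ℝ) / 16000 ≤ ∑ i ∈ B, (i:ℝ))).card +
        (n-1).choose (r+1) := by
      rw [hAe, filter_powersetCard_insert _ (r+1) x A' hx]
      congr 1
      rw [filter_true_of_mem, card_powersetCard, hn1]
      intro T hT
      rw [mem_powersetCard] at hT
      rw [sum_insert (fun h => hx (hT.1 h))]
      have : (0:ℝ) ≤ ∑ i ∈ T, (i:ℝ) := sum_nonneg (fun i _ => Nat.cast_nonneg i)
      linarith
    have e2 := first_moment (r+1) A' (fun i => (i:ℝ))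
    have e3 : ∑ B ∈ A'.powersetCard (r+2), ∑ i ∈ B, (i:ℝ) ≤
        ∑ B ∈ A'.powersetCard (r+2), ((S:ℝ)/16000 + if (S:ℝ)/16000 ≤ ∑ i ∈ B, (i:ℝ) then (S:ℝ) else 0) := by
      apply sum_le_sum
      intro B hB
      rw [mem_powersetCard] at hB
      have : ∑ i ∈ B, (i:ℝ) ≤ ∑ i ∈ A', (i:ℝ) :=
        sum_le_sum_of_subset_of_nonneg hB.1 (fun i _ _ => Nat.cast_nonneg i)
      have hx0' : (0:ℝ) ≤ x := Nat.cast_nonneg x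
      split_ifs with hh
      · have : (0:ℝ) ≤ S / 16000 := by positivity
        linarith
      · push Not at hh; linarith
    rw [sum_add_distrib, ← sum_filter, sum_const, sum_const, nsmul_eq_mul, nsmul_eq_mul,
      card_powersetCard, hn1] at e3
    rw [hn1] at e2
    have hC4 : ((n-1 : ℕ):ℝ) * ((n-1-1).choose (r+1) : ℝ) = (n-1).choose (r+2) * ((r:ℝ) + 2) := by
      have := Nat.add_one_mul_choose_eq (n-2) (r+1)
      rw [show n - 2 + 1 = n-1 by omega, show n - 2 = n-1-1 by omega] at this
      exact_mod_cast this
    set Q : ℝ := (((A'.powersetCard (r+2)).filter (fun B : Finset ℕ => (S:ℝ) / 16000 ≤ ∑ i ∈ B, (i:ℝ))).card : ℝ) with hQ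
    have hq1 : (1:ℝ)/1000 * ((n-1).choose (r+2) : ℝ) ≤ ((n-1-1).choose (r+1) : ℝ) := by
      have hpos : (0:ℝ) < ((n-1:ℕ):ℝ) := by rw [hn1r]; linarith
      refine le_of_mul_le_mul_left ?_ hpos
      rw [hC4, hn1r]
      have := Nat.cast_nonneg (α := ℝ) ((n-1).choose (r+2))
      nlinarith
    have hq2 : (S:ℝ) / 2 * ((1:ℝ)/1000 * ((n-1).choose (r+2) : ℝ)) ≤
        ((n-1).choose (r+2) : ℝ) * (S/16000) + Q * S := by
      have hle : (S:ℝ)/2 ≤ ∑ i ∈ A', (i:ℝ) := by linarith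
      have := mul_le_mul hq1 hle (by positivity) (Nat.cast_nonneg _)
      rw [← e2] at this
      linarith
    have hq3 : ((n-1).choose (r+2) : ℝ) * (1/4000) ≤ Q := by
      refine le_of_mul_le_mul_left ?_ hSr
      have := mul_nonneg (Nat.cast_nonneg (α := ℝ) ((n-1).choose (r+2))) hSr.le
      linarith
    have e1' : (((A.powersetCard (r+2)).filter (fun B : Finset ℕ => (S:ℝ) / 16000 ≤ ∑ i ∈ B, (i:ℝ))).card : ℝ) =
        Q + ((n-1).choose (r+1) : ℝ) := by rw [e1, hQ]; push_cast; rfl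
    linarith
  · push Not at h2
    have m1 := first_moment (r+1) A (fun i => (i:ℝ))
    have m2 := second_moment r A (fun i => (i:ℝ))
    rw [hn, ← hSS] at m1 m2
    set N : ℝ := (n.choose (r+2) : ℝ) with hNdef
    set C1 : ℝ := ((n-1).choose (r+1) : ℝ) with hC1def
    set C2 : ℝ := ((n-2).choose r : ℝ) with hC2def
    set μ : ℝ := ((r:ℝ)+2)/n with hμ
    have hnpos : (0:ℝ) < n := by linarith
    have hμ1 : 1/1000 ≤ μ := by rw [hμ, le_div_iff₀ hnpos]; exact hk1
    have hμC : C1 = μ * N := by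
      rw [hμ]; field_simp; linarith
    have hC1n : 0 ≤ C1 := Nat.cast_nonneg _
    have hC2n : 0 ≤ C2 := Nat.cast_nonneg _
    have hC2le : C2 ≤ μ * C1 := by
      have hpos : (0:ℝ) < (n:ℝ) - 1 := by linarith
      refine le_of_mul_le_mul_left ?_ hpos
      rw [hn1r] at hC2
      rw [hC2]
      have : (r:ℝ) + 1 ≤ ((n:ℝ) - 1) * μ := by
        rw [hμ, ← mul_div_assoc, le_div_iff₀ hnpos]
        nlinarith
      have h9 := mul_le_mul_of_nonneg_left this hC1n
      linarith
    have hsq : ∑ i ∈ A, (i:ℝ)^2 ≤ x * S := by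
      rw [hSS, mul_sum]
      apply sum_le_sum
      intro i hi
      have : i ≤ x := by
        rw [hAe] at hi
        rcases mem_insert.1 hi with rfl | h
        · exact le_rfl
        · exact (hxA i h).le
      have : (i:ℝ) ≤ x := by exact_mod_cast this
      rw [sq]
      exact mul_le_mul_of_nonneg_right this (Nat.cast_nonneg i)
    have hsq0 : 0 ≤ ∑ i ∈ A, (i:ℝ)^2 := sum_nonneg (fun i _ => sq_nonneg _)
    have hm2 : ∑ B ∈ A.powersetCard (r+2), (∑ i ∈ B, (i:ℝ))^2 ≤ C1 * (x * S) + μ * C1 * S^2 := by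
      rw [m2]
      have a1 := mul_le_mul_of_nonneg_left hsq hC1n
      have a2 := mul_le_mul_of_nonneg_right hC2le (sq_nonneg (S:ℝ))
      have a3 := mul_nonneg hC2n hsq0
      linarith
    have hvar : ∑ B ∈ A.powersetCard (r+2), ((∑ i ∈ B, (i:ℝ)) - μ * S)^2 ≤ C1 * (x * S) := by
      have : ∑ B ∈ A.powersetCard (r+2), ((∑ i ∈ B, (i:ℝ)) - μ * S)^2 =
          ∑ B ∈ A.powersetCard (r+2), (∑ i ∈ B, (i:ℝ))^2
            - 2 * μ * S * (∑ B ∈ A.powersetCard (r+1+1), (∑ i ∈ B, (i:ℝ))) + N * (μ * S)^2 := by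
        rw [mul_sum, ← sum_sub_distrib, hNdef, ← hn, ← card_powersetCard, ← nsmul_eq_mul, ← sum_const,
          ← sum_add_distrib]
        apply sum_congr rfl
        intro B _
        ring
      rw [this, m1]
      have : N * (μ * S)^2 = μ * C1 * S^2 := by rw [hμC]; ring
      rw [this]
      linarith
    have hch : ∑ B ∈ A.powersetCard (r+2), ((if ¬ (S:ℝ)/16000 ≤ ∑ i ∈ B, (i:ℝ) then (μ * S)^2/4 else 0)) ≤
        ∑ B ∈ A.powersetCard (r+2), ((∑ i ∈ B, (i:ℝ)) - μ * S)^2 := by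
      apply sum_le_sum
      intro B _
      split_ifs with hh
      · positivity
      · push Not at hh
        have hm : (S:ℝ)/16000 ≤ μ * S / 2 := by nlinarith
        have : μ * S / 2 ≤ μ * S - ∑ i ∈ B, (i:ℝ) := by linarith
        have h0 : 0 ≤ μ * S / 2 := by positivity
        nlinarith
    rw [← sum_filter, sum_const, nsmul_eq_mul] at hch
    have hc := card_filter_add_card_filter_not (s := A.powersetCard (r+2))
      (fun B : Finset ℕ => (S:ℝ)/16000 ≤ ∑ i ∈ B, (i:ℝ))
    rw [card_powersetCard, hn] at hc
    have hc' : (((A.powersetCard (r+2)).filter (fun B : Finset ℕ => (S:ℝ)/16000 ≤ ∑ i ∈ B, (i:ℝ))).card : ℝ) +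
      (((A.powersetCard (r+2)).filter (fun B : Finset ℕ => ¬ (S:ℝ)/16000 ≤ ∑ i ∈ B, (i:ℝ))).card : ℝ) = N := by
      rw [hNdef, ← hc]; push_cast; rfl
    set L : ℝ := (((A.powersetCard (r+2)).filter (fun B : Finset ℕ => ¬ (S:ℝ)/16000 ≤ ∑ i ∈ B, (i:ℝ))).card : ℝ) with hL
    have hLN : L ≤ N / 4 := by
      have hμ0 : 0 < μ := by linarith
      have hpos : 0 < (μ * S)^2/4 := by positivity
      refine le_of_mul_le_mul_right ((hch.trans hvar).trans ?_) hpos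
      rw [hμC]
      have a1 : (x:ℝ) * S ≤ S^2 / 16000 := by nlinarith
      have a2 : μ * N * (x * S) ≤ μ * N * (S^2/16000) :=
        mul_le_mul_of_nonneg_left a1 (by positivity)
      have a3 : μ * N * (S^2/16000) ≤ μ * N * (μ * S^2 / 16) := by
        apply mul_le_mul_of_nonneg_left _ (by positivity)
        nlinarith [sq_nonneg (S:ℝ)]
      calc _ ≤ _ := a2
        _ ≤ _ := a3
        _ = _ := by ring
    linarith

lemma dk_eq (k : ℕ) (A : Finset ℕ) : dk k A + badc (∑ i ∈ A, i) k A = A.card.choose k := by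
  unfold dk badc
  have hc := card_filter_add_card_filter_not (s := A.powersetCard k)
      (fun B => (∑ i ∈ B, i) ∣ ∑ i ∈ A, i)
  rw [card_powersetCard] at hc
  exact hc

lemma half_of_dvd (A B : Finset ℕ) (hA : ∀ a ∈ A, 0 < a) (hB : B ⊆ A) (hc : B.card < A.card)
    (hd : (∑ i ∈ B, i) ∣ ∑ i ∈ A, i) : 2 * ∑ i ∈ B, i ≤ ∑ i ∈ A, i := by
  have h2 : 0 < ∑ i ∈ A \ B, i := by
    apply sum_pos (fun i hi => hA i (mem_sdiff.1 hi).1)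
    rw [← card_pos, card_sdiff_of_subset hB]; omega
  have h3 := sum_sdiff (f := fun z : ℕ => z) hB
  obtain ⟨c, hc⟩ := hd
  have : 2 ≤ c := by
    by_contra h
    have : c < 2 := by omega
    interval_cases c <;> omega
  have := Nat.mul_le_mul_left (∑ i ∈ B, i) this
  omega

/-- Regime 3 -/
lemma regime3 (A : Finset ℕ) (n k : ℕ) (hA : ∀ a ∈ A, 0 < a) (hn : A.card = n)
    (hk : n < 2 * k) (hkn : k < n) : dk k A ≤ (n-1).choose k := by
  let e := A.orderEmbOfFin hn
  have heA : ∀ i, e i ∈ A := fun i => A.orderEmbOfFin_mem hn i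
  have hsurj : ∀ a ∈ A, ∃ i, e i = a := by
    intro a ha
    have : a ∈ Set.range (A.orderEmbOfFin hn) := by
      rw [range_orderEmbOfFin]; exact ha
    exact this
  let D := (A.powersetCard k).filter (fun B => B.sum id ∣ A.sum id)
  have hD : ∀ B ∈ D, B ⊆ A ∧ B.card = k ∧ (∑ i ∈ B, i) ∣ ∑ i ∈ A, i := by
    intro B hB
    simp only [D, mem_filter, mem_powersetCard] at hB
    exact ⟨hB.1.1, hB.1.2, hB.2⟩
  let φ : Finset ℕ → Finset (Fin n) := fun B => univ.filter (fun i => e i ∉ B)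
  have hφ : Set.InjOn φ (D : Set (Finset ℕ)) := by
    intro B hB C hC hBC
    have key : ∀ i, e i ∈ B ↔ e i ∈ C := by
      intro i
      have : i ∈ φ B ↔ i ∈ φ C := by rw [hBC]
      simp only [φ, mem_filter, mem_univ, true_and] at this
      tauto
    ext a
    constructor
    · intro ha
      obtain ⟨i, rfl⟩ := hsurj a ((hD B hB).1 ha)
      exact (key i).1 ha
    · intro ha
      obtain ⟨i, rfl⟩ := hsurj a ((hD C hC).1 ha)
      exact (key i).2 ha
  have hcard : ∀ B ∈ D, (φ B).card = n - k := by
    intro B hB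
    obtain ⟨h1, h2, -⟩ := hD B hB
    have : ((φ B).map e.toEmbedding) = A \ B := by
      ext a
      simp only [φ, mem_map, mem_filter, mem_univ, true_and, mem_sdiff]
      constructor
      · rintro ⟨i, hi, rfl⟩; exact ⟨heA i, hi⟩
      · rintro ⟨ha, hb⟩
        obtain ⟨i, rfl⟩ := hsurj a ha
        exact ⟨i, hb, rfl⟩
    rw [← card_map e.toEmbedding, this, card_sdiff_of_subset h1, hn, h2]
  have hEKR := erdos_ko_rado (𝒜 := D.image φ) (r := n - k) ?_ ?_ (by omega)
  · rw [card_image_of_injOn hφ] at hEKR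
    have : (n-1).choose (n-k-1) = (n-1).choose k := by
      rw [← Nat.choose_symm (by omega : k ≤ n-1)]
      congr 1; omega
    rw [this] at hEKR
    exact hEKR
  · intro X hX Y hY hdis
    simp only [coe_image, Set.mem_image, mem_coe] at hX hY
    obtain ⟨B, hB, rfl⟩ := hX
    obtain ⟨C, hC, rfl⟩ := hY
    obtain ⟨b1, b2, b3⟩ := hD B hB
    obtain ⟨c1, c2, c3⟩ := hD C hC
    have hun : B ∪ C = A := by
      apply Subset.antisymm (union_subset b1 c1)
      intro a ha
      obtain ⟨i, rfl⟩ := hsurj a ha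
      by_contra h
      rw [mem_union, not_or] at h
      exact (disjoint_left.1 hdis) (by simp [φ, h.1] : i ∈ φ B) (by simp [φ, h.2])
    have h1 := half_of_dvd A B hA b1 (by omega) b3
    have h2 := half_of_dvd A C hA c1 (by omega) c3
    have h3 := sum_union_inter (s₁ := B) (s₂ := C) (f := fun z : ℕ => z)
    rw [hun] at h3
    have h4 := card_union_add_card_inter B C
    rw [hun] at h4
    have h5 : 0 < ∑ i ∈ B ∩ C, i := by
      apply sum_pos (fun i hi => hA i (b1 (mem_inter.1 hi).1))
      rw [← card_pos]; omega
    omega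
  · intro X hX
    simp only [coe_image, Set.mem_image, mem_coe] at hX
    obtain ⟨B, hB, rfl⟩ := hX
    exact hcard B hB

lemma upper (A : Finset ℕ) (n k : ℕ) (hA : ∀ a ∈ A, 0 < a) (hn : A.card = n)
    (hN : 1000000000 ≤ n) (hk : 1 < k) (hkn : k < n) : dk k A ≤ (n-1).choose k := by
  rcases Nat.lt_or_ge n (2*k) with h | h
  · exact regime3 A n k hA hn h hkn
  · obtain ⟨r, rfl⟩ : ∃ r, k = r + 2 := ⟨k-2, by omega⟩
    have hb : (n-1).choose (r+1) ≤ badc (∑ i ∈ A, i) (r+2) A := by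
      rcases Nat.le_total (1000 * (r+2)) n with hh2 | hh2
      · exact regime1 A n r hA hn (by omega) hh2
      · exact regime2 A n r hA hn hN hh2 h
    have h1 := dk_eq (r+2) A
    have h2 := Nat.choose_succ_succ (n-1) (r+1)
    rw [show (n - 1).succ = n by omega] at h2
    rw [hn] at h1
    simp only [Nat.succ_eq_add_one, add_assoc, Nat.reduceAdd] at h2
    omega

lemma lower (n k : ℕ) (hk : 1 < k) (hkn : k < n) :
    ∃ A : Finset ℕ, (∀ a ∈ A, 0 < a) ∧ A.card = n ∧ (n-1).choose k ≤ dk k A := by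
  let W := Finset.Ico 1 n
  have hs : ∑ i ∈ W, i + n ≤ n * n := by
    have : ∑ i ∈ W, i ≤ ∑ i ∈ W, n := sum_le_sum (fun i hi => by
      simp only [W, mem_Ico] at hi; omega)
    rw [sum_const, smul_eq_mul] at this
    simp only [W, Nat.card_Ico] at this
    obtain ⟨m, rfl⟩ : ∃ m, n = m + 1 := ⟨n-1, by omega⟩
    simp only [Nat.add_sub_cancel] at this
    simp only [W]
    nlinarith
  have hf : n * n ≤ Nat.factorial (n*n) := Nat.self_le_factorial _
  set x := Nat.factorial (n*n) - ∑ i ∈ W, i with hx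
  have hxn : n ≤ x := by omega
  have hxW : x ∉ W := by simp only [W, mem_Ico]; omega
  have hsum : (insert x W).sum id = Nat.factorial (n*n) := by
    rw [sum_insert hxW]
    change x + ∑ i ∈ W, i = _
    omega
  refine ⟨insert x W, ?_, ?_, ?_⟩
  · intro a ha
    rcases mem_insert.1 ha with rfl | h
    · omega
    · simp only [W, mem_Ico] at h; omega
  · rw [card_insert_of_notMem hxW]; simp only [W, Nat.card_Ico]; omega
  · unfold dk
    rw [hsum]
    have : (W.powersetCard k).card = (n-1).choose k := by
      rw [card_powersetCard]; simp [W]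
    rw [← this]
    apply card_le_card
    intro B hB
    rw [mem_powersetCard] at hB
    rw [mem_filter, mem_powersetCard]
    refine ⟨⟨hB.1.trans (subset_insert _ _), hB.2⟩, ?_⟩
    apply Nat.dvd_factorial
    · apply sum_pos
      · intro i hi
        have := hB.1 hi
        simp only [W, mem_Ico] at this
        exact this.1
      · rw [← card_pos]; omega
    · have : B.sum id ≤ ∑ i ∈ W, i := sum_le_sum_of_subset hB.1
      omega

/-- **Modified Huynh conjecture (Conjecture 2, proved).** For all but finitely many
pairs `(k, n)` with `1 < k < n`, `d(k, n) = C(n-1, k)`. -/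
theorem zbarsky_huynh_conjecture_modified :
    {p : ℕ × ℕ | 1 < p.1 ∧ p.1 < p.2 ∧
      dn p.1 p.2 ≠ (p.2 - 1).choose p.1}.Finite := by
  apply Set.Finite.subset ((Set.finite_Iio (1000000000:ℕ)).prod (Set.finite_Iio (1000000000:ℕ)))
  rintro ⟨k, n⟩ ⟨h1, h2, h3⟩
  simp only at h1 h2 h3
  simp only [Set.mem_prod, Set.mem_Iio]
  suffices n < 1000000000 by omega
  by_contra hN
  apply h3
  have hub : ∀ t ∈ {t : ℕ | ∃ A : Finset ℕ, (∀ a ∈ A, 0 < a) ∧ A.card = n ∧ dk k A = t},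
      t ≤ (n-1).choose k := by
    rintro t ⟨A, hA, hn, rfl⟩
    exact upper A n k hA hn (by omega) h1 h2
  obtain ⟨A, hA, hn, hd⟩ := lower n k h1 h2
  apply le_antisymm
  · exact csSup_le ⟨_, A, hA, hn, rfl⟩ hub
  · exact hd.trans (le_csSup ⟨_, hub⟩ ⟨A, hA, hn, rfl⟩)
end

section
/- For any distinct positive integers a_1, ..., a_{n-1} and any 1 ≤ k ≤ n-1, there exists a positive integer a_n, distinct from a_1, ..., a_{n-1}, such that every k-element subset B of {a_1, ..., a_{n-1}} satisfies ∑_{b∈B} b divides a_n + ∑_{i=1}^{n-1} a_i. Consequently, d(k,n) ≥ C(n-1,k) for all 1 ≤ k ≤ n. -/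
lemma exists_next (S : Finset ℕ) (hS : ∀ a ∈ S, 0 < a) (k : ℕ) (hk : 1 ≤ k) :
    ∃ aₙ : ℕ, 0 < aₙ ∧ aₙ ∉ S ∧ ∀ B ⊆ S, B.card = k → B.sum id ∣ aₙ + S.sum id := by
  obtain ⟨P, hP⟩ : ∃ P, P = ∏ B ∈ S.powersetCard k, B.sum id := ⟨_, rfl⟩
  obtain ⟨T, hT⟩ : ∃ T, T = S.sum id := ⟨_, rfl⟩
  have hpos : 0 < P := by
    rw [hP]
    refine Finset.prod_pos fun B hB => ?_
    rw [Finset.mem_powersetCard] at hB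
    exact Finset.sum_pos (fun a ha => hS a (hB.1 ha)) (Finset.card_pos.mp (by omega))
  have hge : 2 * T + 1 ≤ P * (2 * T + 1) := Nat.le_mul_of_pos_left _ hpos
  refine ⟨P * (2 * T + 1) - T, by omega, fun hmem => ?_, fun B hB hc => ?_⟩
  · have h : id (P * (2 * T + 1) - T) ≤ S.sum id :=
      Finset.single_le_sum (f := id) (fun _ _ => Nat.zero_le _) hmem
    simp only [id] at h hT
    omega
  · rw [← hT, Nat.sub_add_cancel (by omega), hP]
    exact Dvd.dvd.mul_right
      (Finset.dvd_prod_of_mem (fun B : Finset ℕ => B.sum id)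
        (Finset.mem_powersetCard.mpr ⟨hB, hc⟩)) _

/-- For any distinct positive integers `a₁, …, a_{n-1}` and any `1 ≤ k ≤ n - 1`, there is
a positive integer `aₙ`, distinct from the others, such that every `k`-element subset `B`
of `{a₁, …, a_{n-1}}` satisfies `∑ B ∣ aₙ + ∑ᵢ aᵢ`. Consequently `d(k, n) ≥ C(n-1, k)`
for all `1 ≤ k ≤ n`. -/
theorem lower_bound_anti_pencil (n : ℕ) :
    (∀ S : Finset ℕ, (∀ a ∈ S, 0 < a) → S.card = n - 1 →
      ∀ k : ℕ, 1 ≤ k → k ≤ n - 1 →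
        ∃ aₙ : ℕ, 0 < aₙ ∧ aₙ ∉ S ∧
          ∀ B ⊆ S, B.card = k → B.sum id ∣ aₙ + S.sum id) ∧
    (∀ k : ℕ, 1 ≤ k → k ≤ n → (n - 1).choose k ≤ dn k n) := by
  refine ⟨fun S hS _ k hk _ => exists_next S hS k hk, fun k hk hkn => ?_⟩
  obtain ⟨S, hS, hc⟩ : ∃ S : Finset ℕ, (∀ a ∈ S, 0 < a) ∧ S.card = n - 1 :=
    ⟨Finset.Icc 1 (n - 1), fun a ha => (Finset.mem_Icc.mp ha).1, by simp⟩
  obtain ⟨m, hm, hmS, hd⟩ := exists_next S hS k hk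
  have h1 : (n - 1).choose k ≤ dk k (insert m S) := by
    rw [← hc, ← Finset.card_powersetCard]
    refine Finset.card_le_card fun B hB => ?_
    rw [Finset.mem_powersetCard] at hB
    rw [Finset.mem_filter, Finset.mem_powersetCard, Finset.sum_insert hmS]
    exact ⟨⟨hB.1.trans (Finset.subset_insert _ _), hB.2⟩, hd B hB.1 hB.2⟩
  refine h1.trans (le_csSup ⟨n.choose k, ?_⟩ ⟨insert m S, ?_, ?_, rfl⟩)
  · rintro t ⟨A, -, hA, rfl⟩
    rw [← hA, ← Finset.card_powersetCard]
    exact Finset.card_filter_le _ _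
  · intro a ha
    rcases Finset.mem_insert.mp ha with rfl | h
    · exact hm
    · exact hS a h
  · rw [Finset.card_insert_of_notMem hmS, hc]
    omega
end

section
/- For every integer s ≥ 2 and every integer n ≥ 3, d^s(n-1,n) ≥ 2 > C(n-1,n-1). That is, there exists a set A of n distinct positive integers having at least two distinct (n-1)-element subsets B with ∑_{b∈B} b dividing s·∑_{a∈A} a. -/
/-- `d^s_k(A)`: the number of `k`-element subsets of `A` that are `s`-divisors of `A`,
where `B` is an `s`-divisor of `A` if `∑ B` divides `s · ∑ A`. -/
def dsk (s k : ℕ) (A : Finset ℕ) : ℕ :=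
  ((A.powersetCard k).filter (fun B => B.sum id ∣ s * A.sum id)).card

/-- `d^s(k, n)`: the maximum of `d^s_k(A)` over all sets `A` of `n` positive integers. -/
noncomputable def dsn (s k n : ℕ) : ℕ :=
  sSup {t : ℕ | ∃ A : Finset ℕ, (∀ a ∈ A, 0 < a) ∧ A.card = n ∧ dsk s k A = t}

lemma exists_example (s : ℕ) (hs : 2 ≤ s) (n : ℕ) (hn : 3 ≤ n) :
    ∃ A : Finset ℕ, A.card = n ∧ (∀ a ∈ A, 0 < a) ∧
      ∃ B₁ B₂ : Finset ℕ, B₁ ≠ B₂ ∧ B₁ ⊆ A ∧ B₂ ⊆ A ∧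
        B₁.card = n - 1 ∧ B₂.card = n - 1 ∧
        B₁.sum id ∣ s * A.sum id ∧ B₂.sum id ∣ s * A.sum id := by
  obtain ⟨u, rfl⟩ := Nat.exists_eq_add_of_le' hs
  obtain ⟨m, rfl⟩ := Nat.exists_eq_add_of_le' hn
  obtain ⟨T, hT⟩ : ∃ T, T = (Finset.Icc 1 m).sum id := ⟨_, rfl⟩
  obtain ⟨t, ht⟩ : ∃ t, t = T + m + 1 := ⟨_, rfl⟩
  obtain ⟨x, hx⟩ : ∃ x, x = (u + 4) * t := ⟨_, rfl⟩
  obtain ⟨y, hy⟩ : ∃ y, y = (2 * u + 6) * t := ⟨_, rfl⟩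
  obtain ⟨z, hz⟩ : ∃ z, z = (u ^ 2 + 4 * u + 1) * t + m + 1 := ⟨_, rfl⟩
  have hxm : m < x := by nlinarith
  have hym : m < y := by nlinarith
  have hzm : m < z := by nlinarith
  have hxy : x ≠ y := by
    have : x < y := by nlinarith
    omega
  have hxz : x ≠ z := by
    rcases Nat.eq_zero_or_pos u with rfl | hu
    · omega
    · have : (u + 4) * t ≤ (u ^ 2 + 4 * u + 1) * t := Nat.mul_le_mul_right _ (by nlinarith)
      omega
  have hyz : y ≠ z := by
    rcases Nat.lt_or_ge u 2 with hu | hu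
    · interval_cases u <;> omega
    · have : (2 * u + 6) * t ≤ (u ^ 2 + 4 * u + 1) * t := Nat.mul_le_mul_right _ (by nlinarith)
      omega
  have nx : x ∉ Finset.Icc 1 m := by simp; omega
  have ny : y ∉ Finset.Icc 1 m := by simp; omega
  have nz : z ∉ Finset.Icc 1 m := by simp; omega
  have nyz : y ∉ insert z (Finset.Icc 1 m) := by
    rw [Finset.mem_insert]; tauto
  have nxz : x ∉ insert z (Finset.Icc 1 m) := by
    rw [Finset.mem_insert]; tauto
  have nxyz : x ∉ insert y (insert z (Finset.Icc 1 m)) := by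
    rw [Finset.mem_insert]; tauto
  refine ⟨insert x (insert y (insert z (Finset.Icc 1 m))), ?_, ?_,
    insert y (insert z (Finset.Icc 1 m)), insert x (insert z (Finset.Icc 1 m)), ?_,
    Finset.subset_insert _ _, Finset.insert_subset_insert _ (Finset.subset_insert _ _),
    ?_, ?_, ?_, ?_⟩
  · rw [Finset.card_insert_of_notMem nxyz, Finset.card_insert_of_notMem nyz,
      Finset.card_insert_of_notMem nz, Nat.card_Icc]
    omega
  · intro a ha
    simp only [Finset.mem_insert, Finset.mem_Icc] at ha
    omega
  · intro h
    apply nxyz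
    rw [h]
    exact Finset.mem_insert_self _ _
  · rw [Finset.card_insert_of_notMem nyz, Finset.card_insert_of_notMem nz, Nat.card_Icc]
    omega
  · rw [Finset.card_insert_of_notMem nxz, Finset.card_insert_of_notMem nz, Nat.card_Icc]
    omega
  · rw [Finset.sum_insert nxyz, Finset.sum_insert nyz, Finset.sum_insert nz, ← hT]
    refine ⟨u + 3, ?_⟩
    have h : z + T = (u ^ 2 + 4 * u + 2) * t := by rw [hz]; nlinarith
    simp only [id, h, hx, hy]
    ring
  · rw [Finset.sum_insert nxyz, Finset.sum_insert nyz, Finset.sum_insert nxz,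
      Finset.sum_insert nz, ← hT]
    refine ⟨u + 4, ?_⟩
    have h : z + T = (u ^ 2 + 4 * u + 2) * t := by rw [hz]; nlinarith
    simp only [id, h, hx, hy]
    ring

/-- For every `s ≥ 2` and `n ≥ 3`, `d^s(n-1, n) ≥ 2 > C(n-1, n-1)`: there is a set `A` of
`n` distinct positive integers with at least two distinct `(n-1)`-element subsets `B` such
that `∑ B` divides `s · ∑ A`. -/
theorem k_eq_n_sub_one_exception (s : ℕ) (hs : 2 ≤ s) (n : ℕ) (hn : 3 ≤ n) :
    2 ≤ dsn s (n - 1) n ∧ (n - 1).choose (n - 1) < 2 ∧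
    ∃ A : Finset ℕ, A.card = n ∧ (∀ a ∈ A, 0 < a) ∧
      ∃ B₁ B₂ : Finset ℕ, B₁ ≠ B₂ ∧ B₁ ⊆ A ∧ B₂ ⊆ A ∧
        B₁.card = n - 1 ∧ B₂.card = n - 1 ∧
        B₁.sum id ∣ s * A.sum id ∧ B₂.sum id ∣ s * A.sum id := by
  have key := exists_example s hs n hn
  refine ⟨?_, by simp, key⟩
  obtain ⟨A, hA, hpos, B₁, B₂, hne, h1, h2, c1, c2, d1, d2⟩ := key
  have hle : 2 ≤ dsk s (n - 1) A := by
    apply Finset.one_lt_card.mpr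
    refine ⟨B₁, ?_, B₂, ?_, hne⟩
    · exact Finset.mem_filter.mpr ⟨Finset.mem_powersetCard.mpr ⟨h1, c1⟩, d1⟩
    · exact Finset.mem_filter.mpr ⟨Finset.mem_powersetCard.mpr ⟨h2, c2⟩, d2⟩
  refine hle.trans (le_csSup ⟨n.choose (n - 1), ?_⟩ ⟨A, hpos, hA, rfl⟩)
  rintro t ⟨A', -, hc, rfl⟩
  refine (Finset.card_filter_le _ _).trans ?_
  rw [Finset.card_powersetCard, hc]
end

section
/- Let n ≥ 1 and d ≥ 1 be integers, and consider the poset on the lattice points {1, ..., n}^d ordered componentwise: (x_1,...,x_d) ≤ (y_1,...,y_d) if and only if x_i ≤ y_i for all i. Then every antichain in this poset has at most (n+d-2)^{d-1}·√(2/d) elements. -/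
open Finset

theorem chain_lab (n : ℕ) (hn : 1 ≤ n) (d : ℕ) : ∃ lab : (Fin d → ℕ) → List ℕ,
    ∀ x : Fin d → ℕ, (∀ i, x i < n) →
      ((lab x).sum ≤ ∑ i, x i ∧ ∑ i, x i + (lab x).sum ≤ d * (n - 1)) ∧
      (∀ y : Fin d → ℕ, (∀ i, y i < n) → lab x = lab y → ∑ i, x i ≤ ∑ i, y i → x ≤ y) ∧
      (∀ s, (lab x).sum ≤ s → s + (lab x).sum ≤ d * (n - 1) →
        ∃ z : Fin d → ℕ, (∀ i, z i < n) ∧ lab z = lab x ∧ ∑ i, z i = s) := by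
  induction d with
  | zero =>
    refine ⟨fun _ => [], fun x hx => ⟨by simp, fun y _ _ _ i => i.elim0, fun s _ h => ⟨x, hx, rfl, ?_⟩⟩⟩
    simp at h ⊢; omega
  | succ d ih =>
    obtain ⟨lab, H⟩ := ih
    refine ⟨fun x => min (x 0) (d * (n - 1) - (lab (Fin.tail x)).sum - ∑ i, Fin.tail x i)
      :: lab (Fin.tail x), fun x hx => ?_⟩
    have hxt : ∀ i, Fin.tail x i < n := fun i => hx _
    have hx0 := hx 0
    obtain ⟨⟨h1, h2⟩, h3, h4⟩ := H (Fin.tail x) hxt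
    have es : ∀ y : Fin (d+1) → ℕ, ∑ i, y i = y 0 + ∑ i, Fin.tail y i := fun y => by
      rw [Fin.sum_univ_succ]; rfl
    have em : (d + 1) * (n - 1) = d * (n - 1) + (n - 1) := by ring
    refine ⟨?_, ?_, ?_⟩
    · rw [es, em, List.sum_cons]
      constructor <;> omega
    · intro y hy hl hs
      have hyt : ∀ i, Fin.tail y i < n := fun i => hy _
      obtain ⟨⟨k1, k2⟩, k3, k4⟩ := H (Fin.tail y) hyt
      rw [List.cons.injEq] at hl
      obtain ⟨l1, l2⟩ := hl
      rw [es, es] at hs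
      rw [l2] at l1 h1 h2
      have key : x 0 ≤ y 0 ∧ ∑ i, Fin.tail x i ≤ ∑ i, Fin.tail y i := by omega
      have := h3 _ hyt l2 key.2
      intro i
      refine Fin.cases key.1 (fun j => this j) i
    · intro s hs1 hs2
      rw [List.sum_cons] at hs1 hs2
      rw [em] at hs2
      set b := (lab (Fin.tail x)).sum with hb
      set t := min (x 0) (d * (n - 1) - b - ∑ i, Fin.tail x i) with ht
      have : ∃ j s', j + s' = s ∧ j < n ∧ b ≤ s' ∧ s' + b ≤ d * (n-1) ∧
          min j (d * (n - 1) - b - s') = t := by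
        by_cases hc : s + b ≤ d * (n - 1)
        · exact ⟨t, s - t, by omega, by omega, by omega, by omega, by omega⟩
        · by_cases hc2 : s - t + b + t ≤ d * (n - 1)
          · exact ⟨t, s - t, by omega, by omega, by omega, by omega, by omega⟩
          · exact ⟨s - (d * (n-1) - b - t), d * (n-1) - b - t, by omega, by omega, by omega, by omega, by omega⟩
      obtain ⟨j, s', e1, e2, e3, e4, e5⟩ := this
      obtain ⟨z, z1, z2, z3⟩ := h4 s' e3 e4
      refine ⟨Fin.cons j z, ?_, ?_, ?_⟩
      · intro i
        refine Fin.cases ?_ (fun k => ?_) i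
        · simpa using e2
        · simpa using z1 k
      · simp only [Fin.tail_cons, Fin.cons_zero, z2, z3, ← hb, e5]
        rw [← ht]
      · rw [es]; simp [z3, e1]

def Lay (n d m : ℕ) : Finset (Fin d → ℕ) :=
  (Fintype.piFinset fun _ : Fin d => range n).filter (fun x => ∑ i, x i = m)

theorem anti_le_lay (n d : ℕ) (hn : 1 ≤ n) (U : Finset (Fin d → ℕ))
    (hU : ∀ x ∈ U, ∀ i, 1 ≤ x i ∧ x i ≤ n)
    (hanti : IsAntichain (· ≤ ·) (U : Set (Fin d → ℕ))) :
    U.card ≤ (Lay n d (d * (n - 1) / 2)).card := by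
  obtain ⟨lab, H⟩ := chain_lab n hn d
  let p : (Fin d → ℕ) → (Fin d → ℕ) := fun x i => x i - 1
  have hp : ∀ x ∈ U, ∀ i, p x i < n := fun x hx i => by
    have := hU x hx i
    simp only [p]; omega
  have hz : ∀ x, ∃ z : Fin d → ℕ, x ∈ U → ((∀ i, z i < n) ∧ lab z = lab (p x) ∧
      ∑ i, z i = d * (n - 1) / 2) := by
    intro x
    by_cases hx : x ∈ U
    · obtain ⟨⟨h1, h2⟩, -, h3⟩ := H (p x) (hp x hx)
      obtain ⟨z, hz⟩ := h3 (d * (n - 1) / 2) (by omega) (by omega)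
      exact ⟨z, fun _ => hz⟩
    · exact ⟨x, fun h => absurd h hx⟩
  choose z hz using hz
  apply Finset.card_le_card_of_injOn z
  · intro x hx
    obtain ⟨a, b, c⟩ := hz x hx
    simp [Lay, a, c]
  · have key : ∀ x ∈ U, ∀ y ∈ U, lab (p x) = lab (p y) → ∑ i, p x i ≤ ∑ i, p y i → x = y := by
      intro x hx y hy hl hs
      have := (H (p x) (hp x hx)).2.1 (p y) (hp y hy) hl hs
      by_contra hne
      refine hanti hx hy hne (fun i => ?_)
      have h1 : x i - 1 ≤ y i - 1 := this i
      have h2 := hU x hx i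
      have h3 := hU y hy i
      show x i ≤ y i
      omega
    intro x hx y hy hxy
    have hl : lab (p x) = lab (p y) := by
      rw [← (hz x hx).2.1, ← (hz y hy).2.1, hxy]
    rcases le_total (∑ i, p x i) (∑ i, p y i) with h | h
    · exact key x hx y hy hl h
    · exact (key y hy x hx hl.symm h).symm

theorem lay_trivial (n d m : ℕ) : (Lay n (d + 1) m).card ≤ n ^ d := by
  have : n ^ d = (Fintype.piFinset fun _ : Fin d => range n).card := by simp
  rw [this]
  apply Finset.card_le_card_of_injOn Fin.tail
  · intro x hx
    simp [Lay] at hx ⊢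
    intro i; exact hx.1 _
  · intro x hx y hy h
    simp only [Lay, coe_filter, Set.mem_ofPred_eq, Fin.sum_univ_succ] at hx hy
    have h' : ∀ i : Fin d, x i.succ = y i.succ := fun i => congrFun h i
    have : x 0 = y 0 := by
      have a := hx.2; have b := hy.2
      simp only [h'] at a
      omega
    ext i
    exact Fin.cases this h' i

theorem abs_sum (n : ℕ) : ∀ c : ℤ, (n:ℤ)^2 ≤ 4 * ∑ x ∈ range n, |(x:ℤ) - c| + 1 := by
  induction n using Nat.twoStepInduction with
  | zero => intro c; simp
  | one => intro c; simp
  | more n ih _ =>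
    intro c
    have := ih (c - 1)
    rw [sum_range_succ, sum_range_succ']
    have e : ∀ x : ℕ, ((x + 1 : ℕ) : ℤ) - c = x - (c - 1) := fun x => by push_cast; ring
    simp only [e]
    have h1 : (n:ℤ) + 1 ≤ |((0:ℕ):ℤ) - c| + |(n:ℤ) - (c - 1)| := by
      have a := neg_abs_le (((0:ℕ):ℤ) - c)
      have b := le_abs_self ((n:ℤ) - (c-1))
      push_cast at a b ⊢
      linarith
    push_cast at h1 ⊢
    nlinarith

theorem lay_three (n : ℕ) (hn : 1 ≤ n) : 4 * (Lay n 3 (3 * (n - 1) / 2)).card ≤ 3 * n ^ 2 + 1 := by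
  set m := 3 * (n - 1) / 2 with hm
  let c : ℕ := m - (n - 1)
  let A : ℕ → Finset ℕ := fun x => Finset.Icc (m - x - (n-1)) (min (n-1) (m-x))
  have h : (Lay n 3 m).card ≤ ((range n).sigma A).card := by
    apply Finset.card_le_card_of_injOn (fun x => ⟨x 0, x 1⟩)
    · intro x hx
      simp [Lay, Fin.sum_univ_succ] at hx
      have := hx.1 0; have := hx.1 1; have := hx.1 2
      simp [A]; omega
    · intro x hx y hy h
      simp [Lay, Fin.sum_univ_succ] at hx hy h
      ext i
      fin_cases i
      · exact h.1
      · exact h.2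
      · simp; omega
  rw [card_sigma] at h
  have h2 : ∀ x ∈ range n, ((A x).card : ℤ) ≤ n - |(x:ℤ) - c| := by
    intro x hx
    rw [mem_range] at hx
    simp only [A, Nat.card_Icc, c]
    have : |(x:ℤ) - ((m - (n-1) : ℕ) : ℤ)| = max ((x:ℤ) - ((m - (n-1) : ℕ) : ℤ)) (-((x:ℤ) - ((m - (n-1) : ℕ) : ℤ))) := rfl
    rw [this]
    omega
  have h3 := Finset.sum_le_sum h2
  rw [sum_sub_distrib] at h3
  simp only [sum_const, card_range, nsmul_eq_mul] at h3
  have h4 := abs_sum n c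
  zify at h ⊢
  nlinarith

theorem sin_le_gauss {u : ℝ} (h0 : 0 ≤ u) (h1 : u ≤ Real.pi) :
    Real.sin u ≤ u * Real.exp (-u ^ 2 / 6) := by
  have q1 : ∀ x ∈ Set.Icc 0 Real.pi, 0 ≤ Real.sin x - x * Real.cos x := by
    have hm : MonotoneOn (fun x => Real.sin x - x * Real.cos x) (Set.Icc 0 Real.pi) := by
      apply monotoneOn_of_hasDerivWithinAt_nonneg (f' := fun x => x * Real.sin x) (convex_Icc _ _)
      · fun_prop
      · intro x hx
        have := (Real.hasDerivAt_sin x).sub ((hasDerivAt_id x).mul (Real.hasDerivAt_cos x))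
        refine (this.congr_deriv ?_).hasDerivWithinAt
        simp
      · intro x hx
        rw [interior_Icc] at hx
        exact mul_nonneg hx.1.le (Real.sin_nonneg_of_nonneg_of_le_pi hx.1.le hx.2.le)
    intro x hx
    have := hm (Set.left_mem_Icc.2 Real.pi_pos.le) hx hx.1
    simpa using this
  have q2 : ∀ x ∈ Set.Icc 0 Real.pi, 0 ≤ 3 * Real.sin x - 3 * (x * Real.cos x) - x ^ 2 * Real.sin x := by
    have hm : MonotoneOn (fun x => 3 * Real.sin x - 3 * (x * Real.cos x) - x ^ 2 * Real.sin x)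
        (Set.Icc 0 Real.pi) := by
      apply monotoneOn_of_hasDerivWithinAt_nonneg
        (f' := fun x => x * (Real.sin x - x * Real.cos x)) (convex_Icc _ _)
      · fun_prop
      · intro x hx
        have := (((Real.hasDerivAt_sin x).const_mul 3).sub
          (((hasDerivAt_id x).mul (Real.hasDerivAt_cos x)).const_mul 3)).sub
          ((hasDerivAt_pow 2 x).mul (Real.hasDerivAt_sin x))
        refine (this.congr_deriv ?_).hasDerivWithinAt
        simp
        ring
      · intro x hx
        rw [interior_Icc] at hx
        exact mul_nonneg hx.1.le (q1 x ⟨hx.1.le, hx.2.le⟩)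
    intro x hx
    have := hm (Set.left_mem_Icc.2 Real.pi_pos.le) hx hx.1
    simpa using this
  have ha : AntitoneOn (fun x => Real.sinc x * Real.exp (x ^ 2 / 6)) (Set.Icc 0 Real.pi) := by
    apply antitoneOn_of_hasDerivWithinAt_nonpos
      (f' := fun x => -(3 * Real.sin x - 3 * (x * Real.cos x) - x ^ 2 * Real.sin x) / (3 * x ^ 2)
        * Real.exp (x ^ 2 / 6)) (convex_Icc _ _)
    · have := Real.continuous_sinc
      fun_prop
    · intro x hx
      rw [interior_Icc] at hx
      have hx0 : x ≠ 0 := hx.1.ne'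
      have h := ((Real.hasDerivAt_sin x).div (hasDerivAt_id x) hx0).mul
        (((hasDerivAt_pow 2 x).div_const 6).exp)
      have h' := h.congr_of_eventuallyEq (f₁ := fun x => Real.sinc x * Real.exp (x ^ 2 / 6)) (by
        filter_upwards [eventually_ne_nhds hx0] with y hy
        simp [Real.sinc_of_ne_zero hy])
      refine (h'.congr_deriv ?_).hasDerivWithinAt
      simp
      field_simp
      ring
    · intro x hx
      rw [interior_Icc] at hx
      have := q2 x ⟨hx.1.le, hx.2.le⟩
      apply mul_nonpos_of_nonpos_of_nonneg
      · apply div_nonpos_of_nonpos_of_nonneg <;> [linarith; positivity]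
      · positivity
  rcases h0.eq_or_lt with rfl | h0
  · simp
  have := ha (Set.left_mem_Icc.2 Real.pi_pos.le) ⟨h0.le, h1⟩ h0.le
  simp only [Real.sinc_of_ne_zero h0.ne', Real.sinc_zero] at this
  have e : -u ^ 2 / 6 = -(u ^ 2 / 6) := by ring
  rw [e, Real.exp_neg]
  have hp := Real.exp_pos (u ^ 2 / 6)
  rw [← div_eq_mul_inv, le_div_iff₀ hp]
  rw [div_mul_eq_mul_div, div_le_iff₀ h0] at this
  simpa using this

noncomputable def DK (n : ℕ) (t : ℝ) : ℂ := ∑ j ∈ range n, Complex.exp (2 * j * t * Complex.I)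

theorem DK_cont (n : ℕ) : Continuous (DK n) := by unfold DK; fun_prop

theorem DK_norm (n : ℕ) (t : ℝ) : ‖DK n t‖ * |Real.sin t| = |Real.sin (n * t)| := by
  have h : DK n t * (Complex.exp (Complex.I * (2 * t : ℝ)) - 1) =
      Complex.exp (Complex.I * (2 * (n * t) : ℝ)) - 1 := by
    have : DK n t = ∑ j ∈ range n, Complex.exp (Complex.I * (2 * t : ℝ)) ^ j := by
      unfold DK
      refine sum_congr rfl fun j _ => ?_
      rw [← Complex.exp_nat_mul]
      congr 1; push_cast; ring
    rw [this, geom_sum_mul, ← Complex.exp_nat_mul]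
    congr 2; push_cast; ring
  have h2 := congrArg norm h
  rw [norm_mul, Complex.norm_exp_I_mul_ofReal_sub_one, Complex.norm_exp_I_mul_ofReal_sub_one] at h2
  simp only [Real.norm_eq_abs, abs_mul, abs_two] at h2
  rw [mul_div_cancel_left₀ _ two_ne_zero, mul_div_cancel_left₀ _ two_ne_zero] at h2
  linarith

theorem DK_neg (n : ℕ) (t : ℝ) : ‖DK n (-t)‖ = ‖DK n t‖ := by
  have : DK n (-t) = (starRingEnd ℂ) (DK n t) := by
    unfold DK
    rw [map_sum]
    refine sum_congr rfl fun j _ => ?_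
    rw [← Complex.exp_conj]
    simp [Complex.conj_ofNat]
  rw [this, Complex.norm_conj]

theorem int_exp (k : ℤ) : ∫ t in (-(Real.pi / 2))..(Real.pi / 2), Complex.exp ((2 * k * Complex.I) * (t:ℂ)) =
    if k = 0 then (Real.pi : ℂ) else 0 := by
  split_ifs with h
  · subst h
    simp
  · rw [integral_exp_mul_complex (by simp [h])]
    have : Complex.exp (2 * k * Complex.I * ((Real.pi / 2 : ℝ) : ℂ)) =
        Complex.exp (2 * k * Complex.I * ((-(Real.pi / 2) : ℝ) : ℂ)) := by
      rw [Complex.exp_eq_exp_iff_exists_int]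
      exact ⟨k, by push_cast; ring⟩
    rw [this]; simp

theorem lay_fourier (n d m : ℕ) : Real.pi * (Lay n d m).card ≤
    2 * ∫ t in (0:ℝ)..(Real.pi / 2), ‖DK n t‖ ^ d := by
  have e1 : ∀ t : ℝ, DK n t ^ d * Complex.exp (-(2 * m * t * Complex.I)) =
      ∑ x ∈ Fintype.piFinset (fun _ : Fin d => range n),
        Complex.exp ((2 * ((∑ i, (x i : ℤ) - m : ℤ) : ℂ) * Complex.I) * (t:ℂ)) := by
    intro t
    unfold DK
    rw [Finset.sum_pow', sum_mul]
    refine sum_congr rfl fun x _ => ?_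
    rw [← Complex.exp_sum, ← Complex.exp_add]
    congr 1
    push_cast
    rw [← sum_mul, ← sum_mul, ← mul_sum]
    ring
  have e2 : ∫ t in (-(Real.pi / 2))..(Real.pi / 2), DK n t ^ d * Complex.exp (-(2 * m * t * Complex.I))
      = ((Real.pi * (Lay n d m).card : ℝ) : ℂ) := by
    simp_rw [e1]
    rw [intervalIntegral.integral_finsetSum]
    · simp_rw [int_exp]
      rw [← sum_filter, sum_const, nsmul_eq_mul]
      have : (Lay n d m) = (Fintype.piFinset (fun _ : Fin d => range n)).filter
          (fun x => ∑ i, (x i : ℤ) - m = 0) := by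
        unfold Lay
        refine filter_congr fun x _ => ?_
        rw [sub_eq_zero]; norm_cast
      rw [this]
      push_cast; ring
    · intro x _
      apply Continuous.intervalIntegrable
      fun_prop
  have hc : Continuous fun t => ‖DK n t‖ ^ d := (DK_cont n).norm.pow d
  have e3 : Real.pi * (Lay n d m).card ≤ ∫ t in (-(Real.pi / 2))..(Real.pi / 2), ‖DK n t‖ ^ d := by
    have h := congrArg norm e2
    rw [Complex.norm_real, Real.norm_of_nonneg (by positivity)] at h
    rw [← h]
    refine (intervalIntegral.norm_integral_le_integral_norm (by linarith [Real.pi_pos])).trans ?_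
    apply le_of_eq
    congr 1
    ext t
    rw [norm_mul, norm_pow]
    have : ‖Complex.exp (-(2 * m * t * Complex.I))‖ = 1 := by
      have := Complex.norm_exp_ofReal_mul_I (-(2 * m * t))
      rw [← this]; congr 2; push_cast; ring
    rw [this, mul_one]
  have e4 : ∫ t in (-(Real.pi / 2))..0, ‖DK n t‖ ^ d = ∫ t in (0:ℝ)..(Real.pi / 2), ‖DK n t‖ ^ d := by
    have := intervalIntegral.integral_comp_neg (a := 0) (b := Real.pi / 2) (fun t => ‖DK n t‖ ^ d)
    simp only [DK_neg, neg_zero] at this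
    exact this.symm
  rw [← intervalIntegral.integral_add_adjacent_intervals (b := 0) (hc.intervalIntegrable _ _)
    (hc.intervalIntegrable _ _), e4] at e3
  linarith

theorem int_main (n d : ℕ) (hn : 15 ≤ n) (hd : 1 ≤ d) :
    ∫ t in (0:ℝ)..(Real.pi / n), ‖DK n t‖ ^ d ≤
      (n * (1 - (Real.pi / n) ^ 2 / 6)⁻¹) ^ d * (√(6 * Real.pi / d) / n / 2) := by
  have hn0 : (15:ℝ) ≤ n := by exact_mod_cast hn
  have hnp : (0:ℝ) < n := by linarith
  have hdp : (0:ℝ) < d := by exact_mod_cast hd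
  have hpi := Real.pi_pos
  set a := Real.pi / n with ha
  have ha0 : 0 < a := by positivity
  have ha1 : a ≤ 1 := by
    rw [ha, div_le_one hnp]; linarith [Real.pi_lt_d2]
  have hna : n * a = Real.pi := by rw [ha]; field_simp
  have hC : 0 < 1 - a ^ 2 / 6 := by nlinarith
  set C := (1 - a ^ 2 / 6)⁻¹ with hCd
  have hC0 : 0 < C := inv_pos.2 hC
  have hC1 : 1 ≤ C := by
    rw [hCd, one_le_inv₀ hC]; nlinarith
  have pt : ∀ t ∈ Set.Icc 0 a, ‖DK n t‖ ^ d ≤ (n * C) ^ d * Real.exp (-(d * n ^ 2 / 6) * t ^ 2) := by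
    intro t ht
    have h1 : ‖DK n t‖ ≤ (n * C) * Real.exp (-(n * t) ^ 2 / 6) := by
      rcases ht.1.eq_or_lt with h | h
      · rw [← h]
        have : DK n 0 = n := by simp [DK]
        rw [this]
        simp
        nlinarith
      · have hs : t * (1 - a ^ 2 / 6) ≤ Real.sin t := by
          have h2 := (Real.sin_gt_sub_cube h).le
          have : t ^ 2 ≤ a ^ 2 := by
            have := ht.2
            gcongr
          nlinarith
        have hs0 : 0 < Real.sin t := lt_of_lt_of_le (by positivity) hs
        have hk := DK_norm n t
        have hnt : n * t ≤ Real.pi := by rw [← hna]; gcongr; exact ht.2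
        rw [abs_of_pos hs0, abs_of_nonneg (Real.sin_nonneg_of_nonneg_of_le_pi (by positivity) hnt)] at hk
        have hg := sin_le_gauss (u := n * t) (by positivity) hnt
        have : ‖DK n t‖ * (t * (1 - a ^ 2 / 6)) ≤ n * t * Real.exp (-(n * t) ^ 2 / 6) :=
          le_trans (by gcongr) (hk.trans_le hg)
        have h3 : ‖DK n t‖ * (1 - a ^ 2 / 6) ≤ n * Real.exp (-(n * t) ^ 2 / 6) := by
          refine le_of_mul_le_mul_right ?_ h
          linarith
        rw [← le_div_iff₀ hC] at h3
        refine h3.trans_eq ?_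
        rw [hCd]; field_simp
    calc ‖DK n t‖ ^ d ≤ ((n * C) * Real.exp (-(n * t) ^ 2 / 6)) ^ d := by gcongr
      _ = _ := by
        rw [mul_pow, ← Real.exp_nat_mul]
        congr 2; ring
  have hb : 0 < (d * n ^ 2 / 6 : ℝ) := by positivity
  calc _ ≤ ∫ t in (0:ℝ)..a, (n * C) ^ d * Real.exp (-(d * n ^ 2 / 6) * t ^ 2) := by
        apply intervalIntegral.integral_mono_on ha0.le
        · exact ((DK_cont n).norm.pow d).intervalIntegrable _ _
        · apply Continuous.intervalIntegrable; fun_prop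
        · exact pt
    _ = (n * C) ^ d * ∫ t in (0:ℝ)..a, Real.exp (-(d * n ^ 2 / 6) * t ^ 2) := by
        rw [intervalIntegral.integral_const_mul]
    _ ≤ (n * C) ^ d * ∫ t in Set.Ioi (0:ℝ), Real.exp (-(d * n ^ 2 / 6) * t ^ 2) := by
        gcongr
        rw [intervalIntegral.integral_of_le ha0.le]
        apply MeasureTheory.setIntegral_mono_set
        · exact (integrable_exp_neg_mul_sq hb).integrableOn
        · filter_upwards with t using (Real.exp_pos _).le
        · exact Set.Ioc_subset_Ioi_self.eventuallyLE
    _ = _ := by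
        rw [integral_gaussian_Ioi]
        congr 2
        have : Real.pi / (d * n ^ 2 / 6) = 6 * Real.pi / d / (n:ℝ) ^ 2 := by field_simp
        rw [this, Real.sqrt_div' _ (by positivity), Real.sqrt_sq hnp.le]

theorem int_tail (n k : ℕ) (hn : 15 ≤ n) :
    ∫ t in (Real.pi / n)..(Real.pi / 2), ‖DK n t‖ ^ (k + 4) ≤
      (n / 3 : ℝ) ^ k * (n / Real.pi + (n / Real.pi) ^ 3 / 3) := by
  have hn0 : (15:ℝ) ≤ n := by exact_mod_cast hn
  have hnp : (0:ℝ) < n := by linarith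
  have hpi := Real.pi_pos
  have hpi2 := Real.pi_lt_d2
  have hpi3 := Real.pi_gt_d2
  set a := Real.pi / n with ha
  have ha0 : 0 < a := by positivity
  have ha1 : a ≤ 0.22 := by
    rw [ha, div_le_iff₀ hnp]; linarith
  have hna : n * a = Real.pi := by rw [ha]; field_simp
  have hab : a ≤ Real.pi / 2 := by linarith
  have hsa : 3 / (n:ℝ) ≤ Real.sin a := by
    have h2 := (Real.sin_gt_sub_cube ha0).le
    rw [div_le_iff₀ hnp]
    have : (a - a ^ 3 / 6) * n ≤ Real.sin a * n := by gcongr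
    have e : (a - a ^ 3 / 6) * n = Real.pi * (1 - a ^ 2 / 6) := by rw [← hna]; ring
    nlinarith
  have hmono : ∀ t ∈ Set.Icc a (Real.pi / 2), Real.sin a ≤ Real.sin t := fun t ht =>
    Real.sin_le_sin_of_le_of_le_pi_div_two (by linarith) ht.2 ht.1
  have h3n : 0 < 3 / (n:ℝ) := by positivity
  have hpos : ∀ t ∈ Set.Icc a (Real.pi / 2), 0 < Real.sin t := fun t ht =>
    (h3n.trans_le hsa).trans_le (hmono t ht)
  have pt : ∀ t ∈ Set.Icc a (Real.pi / 2), ‖DK n t‖ ^ (k+4) ≤ (n / 3 : ℝ) ^ k * (1 / Real.sin t ^ 4) := by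
    intro t ht
    have hs := hpos t ht
    have hk := DK_norm n t
    rw [abs_of_pos hs] at hk
    have h1 : ‖DK n t‖ ≤ 1 / Real.sin t := by
      rw [le_div_iff₀ hs, hk]; exact Real.abs_sin_le_one _
    have h2 : 1 / Real.sin t ≤ n / 3 := by
      rw [div_le_div_iff₀ hs (by norm_num)]
      have := hsa.trans (hmono t ht)
      rw [div_le_iff₀ hnp] at this
      linarith
    calc ‖DK n t‖ ^ (k+4) = ‖DK n t‖ ^ k * ‖DK n t‖ ^ 4 := pow_add _ _ _
      _ ≤ (n / 3 : ℝ) ^ k * (1 / Real.sin t) ^ 4 := by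
        gcongr
        exact h1.trans h2
      _ = _ := by rw [one_div_pow]
  have hcont : ContinuousOn (fun t => 1 / Real.sin t ^ 4) (Set.uIcc a (Real.pi / 2)) := by
    rw [Set.uIcc_of_le hab]
    apply ContinuousOn.div (by fun_prop) (by fun_prop)
    intro t ht
    exact (pow_pos (hpos t ht) 4).ne'
  have hint : ∫ t in a..(Real.pi / 2), 1 / Real.sin t ^ 4 =
      Real.cos a / Real.sin a + (Real.cos a / Real.sin a) ^ 3 / 3 := by
    rw [intervalIntegral.integral_eq_sub_of_hasDerivAt
      (f := fun t => -(Real.cos t / Real.sin t + (Real.cos t / Real.sin t) ^ 3 / 3))]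
    · simp
    · intro t ht
      rw [Set.uIcc_of_le hab] at ht
      have hs := (hpos t ht).ne'
      have hc : Real.cos t ^ 2 = 1 - Real.sin t ^ 2 := by linarith [Real.sin_sq_add_cos_sq t]
      have h := ((Real.hasDerivAt_cos t).div (Real.hasDerivAt_sin t) hs).congr_deriv
        (show _ = -1 / Real.sin t ^ 2 by
          congr 1
          linear_combination -hc)
      refine ((h.add ((h.pow 3).div_const 3)).neg).congr_deriv ?_
      simp only [Pi.div_apply, Nat.add_one_sub_one, div_pow, hc]
      push_cast
      field_simp
      ring
    · exact hcont.intervalIntegrable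
  have hcot : Real.cos a / Real.sin a ≤ n / Real.pi := by
    have h := Real.lt_tan ha0 (by linarith)
    have hca : 0 < Real.cos a := Real.cos_pos_of_mem_Ioo ⟨by linarith, by linarith⟩
    have hs := hpos a ⟨le_rfl, hab⟩
    rw [Real.tan_eq_sin_div_cos, lt_div_iff₀ hca, ha, div_mul_eq_mul_div, div_lt_iff₀ hnp, ← ha] at h
    rw [div_le_div_iff₀ hs hpi]
    linarith
  have hcot0 : 0 ≤ Real.cos a / Real.sin a := by
    have hca : 0 < Real.cos a := Real.cos_pos_of_mem_Ioo ⟨by linarith, by linarith⟩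
    have hs := hpos a ⟨le_rfl, hab⟩
    positivity
  calc _ ≤ ∫ t in a..(Real.pi / 2), (n / 3 : ℝ) ^ k * (1 / Real.sin t ^ 4) := by
        apply intervalIntegral.integral_mono_on hab
        · exact ((DK_cont n).norm.pow _).intervalIntegrable _ _
        · exact (hcont.const_smul ((n / 3 : ℝ) ^ k)).intervalIntegrable
        · exact pt
    _ = (n / 3 : ℝ) ^ k * (Real.cos a / Real.sin a + (Real.cos a / Real.sin a) ^ 3 / 3) := by
        rw [intervalIntegral.integral_const_mul, hint]
    _ ≤ _ := by gcongr

theorem lay_big (n k m : ℕ) (hn : 15 ≤ n) (hk : k + 4 ≤ n) :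
    ((Lay n (k + 4) m).card : ℝ) ≤ ((n : ℝ) + k + 2) ^ (k + 3) * (√2 / √((k:ℝ) + 4)) := by
  have hn0 : (15:ℝ) ≤ n := by exact_mod_cast hn
  have hnp : (0:ℝ) < n := by linarith
  have hkn : (k:ℝ) + 4 ≤ n := by exact_mod_cast hk
  have hk0 : (0:ℝ) ≤ k := by positivity
  have hpi := Real.pi_pos
  have hpi2 := Real.pi_lt_d2
  have hpi3 := Real.pi_gt_d2
  have hF := lay_fourier n (k + 4) m
  have hc : Continuous fun t => ‖DK n t‖ ^ (k + 4) := (DK_cont n).norm.pow _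
  rw [← intervalIntegral.integral_add_adjacent_intervals (b := Real.pi / n)
    (hc.intervalIntegrable _ _) (hc.intervalIntegrable _ _)] at hF
  have hI1 := int_main n (k + 4) hn (by omega)
  have hI2 := int_tail n k hn
  set S := √((k:ℝ) + 4) with hS
  have hS0 : 0 < S := by positivity
  set F : ℝ := (1 + (k + 2) / n) ^ (k + 3) with hFd
  have hF1 : 1 + (k + 3) * ((k + 2) / n) ≤ F := by
    have h := one_add_mul_le_pow (a := ((k:ℝ) + 2) / n) (by
      have : 0 ≤ ((k:ℝ) + 2) / n := by positivity
      linarith) (k + 3)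
    push_cast at h
    exact h
  have hF6 : 1 + 6 / n ≤ F := by
    refine le_trans ?_ hF1
    rw [← mul_div_assoc]
    gcongr
    nlinarith
  have hFn : (n:ℝ) ^ (k + 3) * F = ((n:ℝ) + k + 2) ^ (k + 3) := by
    rw [hFd, ← mul_pow]; congr 1; field_simp; ring
  have hFge1 : 1 ≤ F := by
    have : 0 ≤ 6 / (n:ℝ) := by positivity
    linarith
  -- constant C
  set c := 1 - (Real.pi / n) ^ 2 / 6 with hcd
  have hcF : (c⁻¹) ^ (k + 4) ≤ F := by
    have hy : (Real.pi / n) ^ 2 / 6 ≤ 1.66 / (n:ℝ) ^ 2 := by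
      rw [div_pow, div_div, div_le_div_iff₀ (by positivity) (by positivity)]
      have : Real.pi ^ 2 ≤ 9.95 := by nlinarith
      nlinarith [sq_nonneg (n:ℝ)]
    have hy1 : 1.66 / (n:ℝ) ^ 2 ≤ 1 := by
      rw [div_le_one (by positivity)]; nlinarith
    have hb := one_add_mul_le_pow (a := -((Real.pi / n) ^ 2 / 6)) (by linarith) (k + 4)
    have hb2 : 1 - 1.66 / n ≤ c ^ (k + 4) := by
      rw [hcd, sub_eq_add_neg 1 ((Real.pi / n) ^ 2 / 6)]
      refine le_trans ?_ hb
      have h1 : ((k + 4 : ℕ) : ℝ) * ((Real.pi / n) ^ 2 / 6) ≤ n * (1.66 / (n:ℝ) ^ 2) := by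
        push_cast
        gcongr
      have h2 : n * (1.66 / (n:ℝ) ^ 2) = 1.66 / n := by field_simp
      linarith
    have h0 : 0 < 1 - 1.66 / (n:ℝ) := by
      rw [sub_pos, div_lt_one hnp]; linarith
    rw [inv_pow]
    refine le_trans (inv_anti₀ h0 hb2) (le_trans ?_ hF6)
    rw [inv_le_iff_one_le_mul₀ h0]
    have : (1 + 6 / n) * (1 - 1.66 / (n:ℝ)) - 1 = (4.34 * n - 9.96) / n ^ 2 := by field_simp; ring
    have : 0 ≤ (4.34 * n - 9.96) / (n:ℝ) ^ 2 := by
      apply div_nonneg <;> [linarith; positivity]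
    linarith
  have hSle : S ≤ 2 * 3 ^ k := by
    rw [hS, Real.sqrt_le_left (by positivity)]
    have h := one_add_mul_le_pow (a := (8:ℝ)) (by norm_num) k
    have : (2 * 3 ^ k : ℝ) ^ 2 = 4 * (1 + 8) ^ k := by
      rw [mul_pow, ← pow_mul, mul_comm k 2, pow_mul]; norm_num
    rw [this]
    linarith
  have hsq : √(6 * Real.pi / ((k + 4 : ℕ) : ℝ)) ≤ 1.39 * Real.pi / S := by
    push_cast
    rw [Real.sqrt_div' _ (by positivity), ← hS]
    gcongr
    rw [Real.sqrt_le_left (by positivity)]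
    nlinarith
  have h1 : (n * c⁻¹) ^ (k + 4) * (√(6 * Real.pi / ((k + 4 : ℕ) : ℝ)) / n / 2) ≤
      (n:ℝ) ^ (k + 3) * F * (1.39 * Real.pi / S) / 2 := by
    calc _ = (n:ℝ) ^ (k + 3) * (c⁻¹) ^ (k + 4) * √(6 * Real.pi / ((k + 4 : ℕ) : ℝ)) / 2 := by
          rw [mul_pow, pow_succ (n:ℝ) (k + 3)]; field_simp
      _ ≤ _ := by gcongr
  have h2 : (n / 3 : ℝ) ^ k * (n / Real.pi + (n / Real.pi) ^ 3 / 3) ≤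
      (n:ℝ) ^ (k + 3) * F * (0.016 * Real.pi / S) / 2 := by
    have hnum : 1 / (n:ℝ) ^ 2 / Real.pi + (1 / Real.pi ^ 3) / 3 ≤ 0.004 * Real.pi := by
      have a1 : 1 / (n:ℝ) ^ 2 / Real.pi ≤ 1 / 15 ^ 2 / 3.14 := by gcongr
      have a2 : (1 / Real.pi ^ 3) / 3 ≤ (1 / 3.14 ^ 3) / 3 := by gcongr
      refine (add_le_add a1 a2).trans ?_
      norm_num at hpi3 ⊢
      linarith
    have h3k : 1 / 3 ^ k ≤ 2 / S := by
      rw [div_le_div_iff₀ (by positivity) hS0]; linarith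
    calc _ = (n:ℝ) ^ (k + 3) * ((1 / 3 ^ k) * (1 / (n:ℝ) ^ 2 / Real.pi + (1 / Real.pi ^ 3) / 3)) := by
          rw [div_pow, pow_add]; field_simp
      _ ≤ (n:ℝ) ^ (k + 3) * ((2 / S) * (0.004 * Real.pi)) := by gcongr
      _ ≤ (n:ℝ) ^ (k + 3) * F * ((2 / S) * (0.004 * Real.pi)) := by
          rw [mul_assoc]
          exact mul_le_mul_of_nonneg_left (le_mul_of_one_le_left (by positivity) hFge1) (by positivity)
      _ = _ := by ring
  rw [← hFn]
  have hs2 : 1.41 ≤ √2 := by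
    apply Real.le_sqrt_of_sq_le; norm_num
  have : Real.pi * (Lay n (k + 4) m).card ≤
      Real.pi * ((n:ℝ) ^ (k + 3) * F * (1.406 / S)) := by
    refine hF.trans ?_
    have e : Real.pi * ((n:ℝ) ^ (k + 3) * F * (1.406 / S)) =
      2 * ((n:ℝ) ^ (k + 3) * F * (1.39 * Real.pi / S) / 2 + (n:ℝ) ^ (k + 3) * F * (0.016 * Real.pi / S) / 2) := by
      ring
    rw [e]
    gcongr
    · exact hI1.trans h1
    · exact hI2.trans h2
  refine (le_of_mul_le_mul_left this hpi).trans ?_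
  gcongr
  linarith

theorem lay_small (n k m : ℕ) (hn : 1 ≤ n) (h : n ≤ 14 ∨ n ≤ k + 4) :
    ((Lay n (k + 4) m).card : ℝ) ≤ ((n : ℝ) + k + 2) ^ (k + 3) * (√2 / √((k:ℝ) + 4)) := by
  have hnp : (0:ℝ) < n := by exact_mod_cast hn
  have hk0 : (0:ℝ) ≤ k := by positivity
  have h0 : ((Lay n (k + 4) m).card : ℝ) ≤ (n:ℝ) ^ (k + 3) := by
    exact_mod_cast lay_trivial n (k + 3) m
  set F : ℝ := (1 + (k + 2) / n) ^ (k + 3) with hFd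
  have hF1 : 1 + (k + 3) * ((k + 2) / n) ≤ F := by
    have h := one_add_mul_le_pow (a := ((k:ℝ) + 2) / n) (by
      have : 0 ≤ ((k:ℝ) + 2) / n := by positivity
      linarith) (k + 3)
    push_cast at h
    exact h
  have hFn : (n:ℝ) ^ (k + 3) * F = ((n:ℝ) + k + 2) ^ (k + 3) := by
    rw [hFd, ← mul_pow]; congr 1; field_simp; ring
  rw [← hFn, mul_assoc]
  refine h0.trans (le_mul_of_one_le_right (by positivity) ?_)
  rw [← mul_div_assoc, one_le_div (by positivity)]
  have hs2 : 1.41421 ≤ √2 := by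
    apply Real.le_sqrt_of_sq_le; norm_num
  have key : √((k:ℝ) + 4) ≤ (1 + (k + 3) * ((k + 2) / n)) * 1.41421 := by
    rw [Real.sqrt_le_left (by positivity)]
    rcases h with h | h
    · have hn14 : (n:ℝ) ≤ 14 := by exact_mod_cast h
      have : (k + 3) * ((k + 2) / 14) ≤ (k + 3) * (((k:ℝ) + 2) / n) := by gcongr
      calc (k:ℝ) + 4 ≤ ((1 + (k + 3) * ((k + 2) / 14)) * 1.41421) ^ 2 := by
            nlinarith [mul_nonneg hk0 hk0, mul_nonneg hk0 (mul_nonneg hk0 hk0), mul_nonneg (mul_nonneg hk0 hk0) (mul_nonneg hk0 hk0)]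
        _ ≤ _ := by gcongr
    · have hn14 : (n:ℝ) ≤ k + 4 := by exact_mod_cast h
      have : (k + 3) * ((k + 2) / (k + 4)) ≤ (k + 3) * (((k:ℝ) + 2) / n) := by gcongr
      have h2 : k / 2 + 1.5 ≤ ((k:ℝ) + 3) * ((k + 2) / (k + 4)) := by
        rw [← mul_div_assoc, le_div_iff₀ (by positivity)]; nlinarith
      calc (k:ℝ) + 4 ≤ ((1 + (k / 2 + 1.5)) * 1.41421) ^ 2 := by
            nlinarith
        _ ≤ _ := by gcongr; linarith
  refine key.trans ?_
  gcongr

/-- **Lemma 1.** Every antichain in the componentwise order on the lattice cube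
`{1, …, n}^d` has at most `(n + d - 2)^(d-1) · √(2/d)` elements. -/
theorem cube_antichain_bound (n d : ℕ) (hn : 1 ≤ n) (hd : 1 ≤ d)
    (U : Finset (Fin d → ℕ))
    (hUcube : ∀ x ∈ U, ∀ i, 1 ≤ x i ∧ x i ≤ n)
    (hanti : IsAntichain (· ≤ ·) (U : Set (Fin d → ℕ))) :
    (U.card : ℝ) ≤ ((n : ℝ) + d - 2) ^ (d - 1) * Real.sqrt (2 / d) := by
  have hL := anti_le_lay n d hn U hUcube hanti
  have hn1 : (1:ℝ) ≤ n := by exact_mod_cast hn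
  have hL' : (U.card : ℝ) ≤ ((Lay n d (d * (n - 1) / 2)).card : ℝ) := by exact_mod_cast hL
  refine hL'.trans ?_
  match d, hd with
  | 1, _ =>
    have := lay_trivial n 0 (1 * (n - 1) / 2)
    have h' : ((Lay n 1 (1 * (n - 1) / 2)).card : ℝ) ≤ 1 := by exact_mod_cast this
    refine h'.trans ?_
    simp
  | 2, _ =>
    have := lay_trivial n 1 (2 * (n - 1) / 2)
    have h' : ((Lay n 2 (2 * (n - 1) / 2)).card : ℝ) ≤ (n:ℝ) ^ 1 := by exact_mod_cast this
    refine h'.trans ?_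
    simp
  | 3, _ =>
    have h' : 4 * ((Lay n 3 (3 * (n - 1) / 2)).card : ℝ) ≤ 3 * (n:ℝ) ^ 2 + 1 := by
      exact_mod_cast lay_three n hn
    have hs : 0.8 ≤ √(2 / (3:ℝ)) := by
      apply Real.le_sqrt_of_sq_le; norm_num
    have : ((n:ℝ) + (3:ℕ) - 2) ^ (3 - 1) * 0.8 ≤ ((n:ℝ) + (3:ℕ) - 2) ^ (3 - 1) * √(2 / ((3:ℕ):ℝ)) := by
      push_cast
      gcongr
    refine le_trans ?_ this
    push_cast
    norm_num
    nlinarith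
  | k + 4, _ =>
    have e : ((n:ℝ) + ((k + 4 : ℕ):ℝ) - 2) ^ (k + 4 - 1) * √(2 / ((k + 4 : ℕ) : ℝ)) =
        ((n : ℝ) + k + 2) ^ (k + 3) * (√2 / √((k:ℝ) + 4)) := by
      rw [Real.sqrt_div (by norm_num)]
      push_cast
      congr 2
      ring
    rw [e]
    by_cases h : n ≤ 14 ∨ n ≤ k + 4
    · exact lay_small n k _ hn h
    · push Not at h
      exact lay_big n k _ (by omega) (by omega)
end
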